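/- arXiv:2511.09713 — 2 statements merged into one kernel-verified Lean document; each statement's English description precedes it below -/
import Mathlib

section
/- Let d ≥ 2 and μ > −1, and let f and g be twice continuously differentiable functions on the closed unit ball B^d of ℝ^d. Then −∫_{B^d} 𝒟_μ f(x) · g(x) W_μ(x) dx = ∫_{B^d} (⟨x,∇⟩f)(x) (⟨x,∇⟩g)(x) (1−‖x‖²) W_μ(x) ‖x‖^{−2} dx + Σ_{1≤i<j≤d} ∫_{B^d} D_{i,j}f(x) D_{i,j}g(x) W_μ(x) ‖x‖^{−2} dx. -/
/-!
With `A = ∇f - ⟨x, ∇f⟩ x` one has `div (W_μ A) = W_μ 𝒟_μ f` in the open ball, and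
`⟨∇g, A⟩ = ⟨∇f, ∇g⟩ - ⟨x, ∇f⟩⟨x, ∇g⟩`. So the identity is the divergence theorem for `g W_μ A`,
rewritten by Lagrange's identity
`‖x‖² ⟨∇f, ∇g⟩ = ⟨x, ∇f⟩⟨x, ∇g⟩ + ∑_{i<j} D_{i,j}f D_{i,j}g` (`lagrange_identity`).

The boundary term vanishes because the normal component `⟨x, A⟩ = (1 - ‖x‖²)⟨x, ∇f⟩` gains a factor
`1 - ‖x‖²`. This is made precise with a radial cutoff `φ_n(x) = η(n (1 - ‖x‖²))`, where `η` is `0`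
on `(-∞, 1]` and `1` on `[2, ∞)`: the field `φ_n g W_μ A` is `C¹` with compact support in the open
ball, so its divergence integrates to zero (`integral_div_truncated`), and `⟨∇φ_n, A⟩` is
`-2 t η'(t) ⟨x, ∇f⟩` at `t = n (1 - ‖x‖²)`, which is bounded uniformly in `n` and tends to `0`
pointwise (`div_truncated`). Dominated convergence gives `green_formula`; it applies since `W_μ` is
integrable for `μ > -1` (`integrable_Wmu`) and the derivatives of `f` and `g` up to order two extend
continuously to the closed ball, hence are bounded (`exists_pd_extension`).
-/

open MeasureTheory Real MvPolynomial Finset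
open scoped ENNReal

noncomputable section

/-- The Euclidean norm of `x ∈ ℝ^d`. -/
def eunorm {d : ℕ} (x : Fin d → ℝ) : ℝ := Real.sqrt (∑ i, (x i) ^ 2)

/-- The closed unit ball `B^d = {x : ‖x‖ ≤ 1}` in `ℝ^d` (Euclidean norm). -/
def Bd (d : ℕ) : Set (Fin d → ℝ) := {x | eunorm x ≤ 1}

/-- The metric `d_B(x,y) = arccos(⟨x,y⟩ + √(1-‖x‖²)√(1-‖y‖²))` on the unit ball. -/
def distB {d : ℕ} (x y : Fin d → ℝ) : ℝ :=
  Real.arccos ((∑ i, x i * y i) +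
    Real.sqrt (1 - eunorm x ^ 2) * Real.sqrt (1 - eunorm y ^ 2))

/-- The metric ball `{y ∈ B^d : d_B(x,y) < r}`. -/
def ballB {d : ℕ} (x : Fin d → ℝ) (r : ℝ) : Set (Fin d → ℝ) :=
  {y | y ∈ Bd d ∧ distB x y < r}

/-- `W` is a doubling weight on the unit ball `B^d` with respect to the metric `d_B`. -/
def IsDoublingBall (d : ℕ) (W : (Fin d → ℝ) → ℝ) : Prop :=
  ∃ L > (0 : ℝ), ∀ x ∈ Bd d, ∀ r : ℝ, 0 < r →
    ∫ y in ballB x (2 * r), W y ≤ L * ∫ y in ballB x r, W y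

/-- The standard simplex `Δ^d = {x : x_i ≥ 0, x_1 + ⋯ + x_d ≤ 1}`. -/
def Td (d : ℕ) : Set (Fin d → ℝ) := {x | (∀ i, 0 ≤ x i) ∧ ∑ i, x i ≤ 1}

/-- The metric `d_Δ(x,y) = arccos(Σ √(x_i y_i) + √((1-|x|)(1-|y|)))` on the simplex. -/
def distT {d : ℕ} (x y : Fin d → ℝ) : ℝ :=
  Real.arccos ((∑ i, Real.sqrt (x i * y i)) +
    Real.sqrt ((1 - ∑ i, x i) * (1 - ∑ i, y i)))

/-- The metric ball `{y ∈ Δ^d : d_Δ(x,y) < r}`. -/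
def ballT {d : ℕ} (x : Fin d → ℝ) (r : ℝ) : Set (Fin d → ℝ) :=
  {y | y ∈ Td d ∧ distT x y < r}

/-- `W` is a doubling weight on the simplex `Δ^d` with respect to the metric `d_Δ`. -/
def IsDoublingSimplex (d : ℕ) (W : (Fin d → ℝ) → ℝ) : Prop :=
  ∃ L > (0 : ℝ), ∀ x ∈ Td d, ∀ r : ℝ, 0 < r →
    ∫ y in ballT x (2 * r), W y ≤ L * ∫ y in ballT x r, W y

/-- Weighted `L^p` norm on the unit ball: for `p < ∞` it is
`(∫_{B^d} |f|^p W)^{1/p}`, and for `p = ∞` the sup norm on `B^d`. -/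
def lpNormB (d : ℕ) (W : (Fin d → ℝ) → ℝ) (p : ℝ≥0∞) (f : (Fin d → ℝ) → ℝ) : ℝ :=
  if p = ⊤ then ⨆ x : Bd d, |f x.1|
  else (∫ x in Bd d, |f x| ^ p.toReal * W x) ^ (1 / p.toReal)

/-- Weighted `L^p` norm on the simplex: for `p < ∞` it is
`(∫_{Δ^d} |f|^p W)^{1/p}`, and for `p = ∞` the sup norm on `Δ^d`. -/
def lpNormT (d : ℕ) (W : (Fin d → ℝ) → ℝ) (p : ℝ≥0∞) (f : (Fin d → ℝ) → ℝ) : ℝ :=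
  if p = ⊤ then ⨆ x : Td d, |f x.1|
  else (∫ x in Td d, |f x| ^ p.toReal * W x) ^ (1 / p.toReal)

/-- Evaluation of a real polynomial in `d` variables at a point of `ℝ^d`. -/
def evalP {d : ℕ} (f : MvPolynomial (Fin d) ℝ) (x : Fin d → ℝ) : ℝ :=
  MvPolynomial.eval x f

/-- The angular derivative `D_{i,j} = x_i ∂_j − x_j ∂_i` acting on polynomials. -/
def Dpoly {d : ℕ} (i j : Fin d) (f : MvPolynomial (Fin d) ℝ) : MvPolynomial (Fin d) ℝ :=
  X i * pderiv j f - X j * pderiv i f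

/-- The classical weight `W_μ(x) = (1−‖x‖²)^μ` on the unit ball. -/
def Wmu (d : ℕ) (μ : ℝ) (x : Fin d → ℝ) : ℝ := (1 - eunorm x ^ 2) ^ μ

/-- The squared weighted `L²(W_μ, B^d)` norm `‖f‖²_{μ,2} = ∫_{B^d} f² W_μ`. -/
def sqNormMu (d : ℕ) (μ : ℝ) (f : (Fin d → ℝ) → ℝ) : ℝ :=
  ∫ x in Bd d, (f x) ^ 2 * Wmu d μ x

/-- The weighted `L²(W_μ, B^d)` norm `‖f‖_{μ,2}`. -/
def normMu (d : ℕ) (μ : ℝ) (f : (Fin d → ℝ) → ℝ) : ℝ :=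
  Real.sqrt (sqNormMu d μ f)

/-- `f ∈ 𝒱_n(W_μ, B^d)`: a polynomial of total degree at most `n`, orthogonal in
`L²(W_μ, B^d)` to every polynomial of total degree less than `n`. -/
def memV (d : ℕ) (μ : ℝ) (n : ℕ) (f : MvPolynomial (Fin d) ℝ) : Prop :=
  f.totalDegree ≤ n ∧ ∀ g : MvPolynomial (Fin d) ℝ, g.totalDegree < n →
    ∫ x in Bd d, evalP f x * evalP g x * Wmu d μ x = 0

/-- The spectral operator `𝒟_μ` acting on polynomials. -/
def DmuP (d : ℕ) (μ : ℝ) (f : MvPolynomial (Fin d) ℝ) : MvPolynomial (Fin d) ℝ :=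
  (∑ i, (1 - X i ^ 2) * pderiv i (pderiv i f))
    - 2 * (∑ i, ∑ j ∈ Finset.Ioi i, X i * X j * pderiv i (pderiv j f))
    - C ((d : ℝ) + 2 * μ + 1) * ∑ i, X i * pderiv i f

/-- The partial derivative `∂_i` of a function on `ℝ^d`. -/
def pd {d : ℕ} (i : Fin d) (f : (Fin d → ℝ) → ℝ) (x : Fin d → ℝ) : ℝ :=
  fderiv ℝ f x (Pi.single i 1)

/-- `⟨x,∇⟩f(x) = Σ_i x_i ∂_i f(x)`. -/
def xgrad {d : ℕ} (f : (Fin d → ℝ) → ℝ) (x : Fin d → ℝ) : ℝ :=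
  ∑ i, x i * pd i f x

/-- The angular derivative `D_{i,j} = x_i ∂_j − x_j ∂_i` acting on functions. -/
def DijF {d : ℕ} (i j : Fin d) (f : (Fin d → ℝ) → ℝ) (x : Fin d → ℝ) : ℝ :=
  x i * pd j f x - x j * pd i f x

/-- The spectral operator `𝒟_μ` acting on functions. -/
def DmuF (d : ℕ) (μ : ℝ) (f : (Fin d → ℝ) → ℝ) (x : Fin d → ℝ) : ℝ :=
  (∑ i, (1 - x i ^ 2) * pd i (pd i f) x)
    - 2 * (∑ i, ∑ j ∈ Finset.Ioi i, x i * x j * pd i (pd j f) x)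
    - ((d : ℝ) + 2 * μ + 1) * ∑ i, x i * pd i f x


/-! ### The unit ball -/

/-- The open unit ball of `ℝ^d`. -/
def Ud (d : ℕ) : Set (Fin d → ℝ) := {x | ∑ i, x i ^ 2 < 1}

lemma eunorm_sq {d : ℕ} (x : Fin d → ℝ) : eunorm x ^ 2 = ∑ i, x i ^ 2 :=
  Real.sq_sqrt (Finset.sum_nonneg fun _ _ => sq_nonneg _)

lemma eunorm_nonneg {d : ℕ} (x : Fin d → ℝ) : 0 ≤ eunorm x := Real.sqrt_nonneg _

lemma norm_toLp_eq_eunorm {d : ℕ} (x : Fin d → ℝ) : ‖WithLp.toLp 2 x‖ = eunorm x := by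
  simp [EuclideanSpace.norm_eq, eunorm]

lemma mem_Bd_iff {d : ℕ} (x : Fin d → ℝ) : x ∈ Bd d ↔ ∑ i, x i ^ 2 ≤ 1 := by
  rw [← eunorm_sq, sq_le_one_iff₀ (eunorm_nonneg x)]; rfl

lemma mem_Ud_iff {d : ℕ} (x : Fin d → ℝ) : x ∈ Ud d ↔ eunorm x < 1 := by
  rw [← sq_lt_one_iff₀ (eunorm_nonneg x), eunorm_sq]; rfl

lemma Ud_subset_Bd (d : ℕ) : Ud d ⊆ Bd d := fun x hx =>
  (mem_Bd_iff x).2 (le_of_lt hx)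

lemma isOpen_Ud (d : ℕ) : IsOpen (Ud d) :=
  isOpen_lt (by fun_prop) continuous_const

lemma Bd_eq_preimage (d : ℕ) :
    Bd d = (WithLp.toLp 2 : (Fin d → ℝ) → EuclideanSpace ℝ (Fin d)) ⁻¹'
      Metric.closedBall 0 1 := by
  ext x; simp [norm_toLp_eq_eunorm, Bd]

lemma Ud_eq_preimage (d : ℕ) :
    Ud d = (WithLp.toLp 2 : (Fin d → ℝ) → EuclideanSpace ℝ (Fin d)) ⁻¹'
      Metric.ball 0 1 := by
  ext x; simp [norm_toLp_eq_eunorm, mem_Ud_iff]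

lemma isCompact_Bd (d : ℕ) : IsCompact (Bd d) := by
  rw [Bd_eq_preimage]
  exact (EuclideanSpace.equiv (Fin d) ℝ).symm.toHomeomorph.isCompact_preimage.2
    (isCompact_closedBall _ _)

lemma uniqueDiffOn_Bd (d : ℕ) : UniqueDiffOn ℝ (Bd d) := by
  apply uniqueDiffOn_convex
  · rw [Bd_eq_preimage]
    exact (convex_closedBall _ _).linear_preimage
      (EuclideanSpace.equiv (Fin d) ℝ).symm.toLinearEquiv.toLinearMap
  · exact ⟨0, interior_maximal (Ud_subset_Bd d) (isOpen_Ud d) (by simp [Ud])⟩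

/-- The unit sphere is a null set, so integrals over the closed and open balls agree. -/
lemma restrict_Bd {d : ℕ} (hd : 2 ≤ d) :
    (volume : Measure (Fin d → ℝ)).restrict (Bd d) = volume.restrict (Ud d) := by
  have : NeZero d := ⟨by omega⟩
  apply Measure.restrict_congr_set
  refine Filter.EventuallyLE.antisymm ?_ (Filter.Eventually.of_forall (Ud_subset_Bd d))
  rw [ae_le_set, Bd_eq_preimage, Ud_eq_preimage, ← Set.preimage_sdiff,
    Metric.closedBall_sdiff_ball,
    (PiLp.volume_preserving_toLp (Fin d)).measure_preimage
      Metric.isClosed_sphere.measurableSet.nullMeasurableSet]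
  exact Measure.addHaar_sphere _ _ _

/-! ### Integrability of the weight -/

/-- The weight is integrable on the ball because `μ > -1`: in polar coordinates it is
comparable to `(1 - r) ^ μ` near `r = 1`. -/
lemma integrable_Wmu {d : ℕ} (hd : 2 ≤ d) {μ : ℝ} (hμ : -1 < μ) :
    Integrable (Wmu d μ) (volume.restrict (Ud d)) := by
  have : NeZero d := ⟨by omega⟩
  have key : IntegrableOn (fun x : EuclideanSpace ℝ (Fin d) => (1 - ‖x‖ ^ 2) ^ μ)
      (Metric.ball 0 1) := by
    rw [integrableOn_fun_norm_addHaar volume (f := fun y : ℝ => (1 - y ^ 2) ^ μ)]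
    have h1 : IntegrableOn (fun y : ℝ => (1 - y) ^ μ) (Set.Ioo 0 1) := by
      have := (intervalIntegral.intervalIntegrable_rpow' (a := 0) (b := 1) hμ).comp_sub_left 1
      rw [sub_zero, sub_self, intervalIntegrable_iff, Set.uIoc_of_ge zero_le_one] at this
      exact this.mono_set Set.Ioo_subset_Ioc_self
    have h2 : ContinuousOn (fun y : ℝ => y ^ (Module.finrank ℝ (EuclideanSpace ℝ (Fin d)) - 1) *
        (1 + y) ^ μ) (Set.Icc 0 1) := by
      refine ContinuousOn.mul (by fun_prop) (ContinuousOn.rpow_const (by fun_prop) ?_)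
      intro y hy; left; linarith [hy.1]
    obtain ⟨C, hC⟩ := isCompact_Icc.exists_bound_of_continuousOn h2
    refine (h1.bdd_mul (c := C) (f := fun y : ℝ =>
      y ^ (Module.finrank ℝ (EuclideanSpace ℝ (Fin d)) - 1) * (1 + y) ^ μ) ?_ ?_).congr ?_
    · exact (h2.mono Set.Ioo_subset_Icc_self).aestronglyMeasurable measurableSet_Ioo
    · filter_upwards [ae_restrict_mem measurableSet_Ioo] with y hy
      exact hC y (Set.Ioo_subset_Icc_self hy)
    · filter_upwards [ae_restrict_mem measurableSet_Ioo] with y hy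
      have : (1 - y ^ 2 : ℝ) = (1 + y) * (1 - y) := by ring
      simp only [smul_eq_mul]
      rw [this, Real.mul_rpow (by linarith [hy.1]) (by linarith [hy.2])]
      ring
  rw [Ud_eq_preimage]
  have := ((PiLp.volume_preserving_toLp (Fin d)).integrableOn_comp_preimage
    (MeasurableEquiv.toLp 2 _).measurableEmbedding).2 key
  refine this.congr (Filter.Eventually.of_forall fun x => ?_)
  simp [Wmu, norm_toLp_eq_eunorm]

/-! ### Bounded measurable functions on the ball -/

/-- Functions on the open ball that may be integrated against any integrable weight:
measurable and bounded there. -/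
def BddMeas (d : ℕ) (u : (Fin d → ℝ) → ℝ) : Prop :=
  AEStronglyMeasurable u (volume.restrict (Ud d)) ∧ ∃ C, ∀ x ∈ Ud d, |u x| ≤ C

namespace BddMeas

variable {d : ℕ} {u v : (Fin d → ℝ) → ℝ}

lemma add (hu : BddMeas d u) (hv : BddMeas d v) : BddMeas d fun x => u x + v x := by
  obtain ⟨C, hC⟩ := hu.2
  obtain ⟨D, hD⟩ := hv.2
  exact ⟨hu.1.add hv.1, C + D, fun x hx =>
    (abs_add_le _ _).trans (add_le_add (hC x hx) (hD x hx))⟩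

lemma mul (hu : BddMeas d u) (hv : BddMeas d v) : BddMeas d fun x => u x * v x := by
  obtain ⟨C, hC⟩ := hu.2
  obtain ⟨D, hD⟩ := hv.2
  refine ⟨hu.1.mul hv.1, C * D, fun x hx => ?_⟩
  rw [abs_mul]
  exact mul_le_mul (hC x hx) (hD x hx) (abs_nonneg _) ((abs_nonneg _).trans (hC x hx))

lemma const (c : ℝ) : BddMeas d fun _ => c :=
  ⟨aestronglyMeasurable_const, |c|, fun _ _ => le_rfl⟩

lemma sub (hu : BddMeas d u) (hv : BddMeas d v) : BddMeas d fun x => u x - v x := by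
  simpa [sub_eq_add_neg] using hu.add ((const (-1)).mul hv)

lemma sum {ι : Type*} (s : Finset ι) {u : ι → (Fin d → ℝ) → ℝ} (h : ∀ i, BddMeas d (u i)) :
    BddMeas d fun x => ∑ i ∈ s, u i x := by
  classical
  induction s using Finset.induction_on with
  | empty => simpa using const 0
  | insert a s ha ih => simpa [Finset.sum_insert ha] using (h a).add ih

lemma of_continuousOn (h : ContinuousOn u (Bd d)) : BddMeas d u := by
  obtain ⟨C, hC⟩ := (isCompact_Bd d).exists_bound_of_continuousOn h
  exact ⟨(h.mono (Ud_subset_Bd d)).aestronglyMeasurable (isOpen_Ud d).measurableSet, C,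
    fun x hx => hC x (Ud_subset_Bd d hx)⟩

lemma congr (hu : BddMeas d u) (h : ∀ x ∈ Ud d, v x = u x) : BddMeas d v := by
  obtain ⟨C, hC⟩ := hu.2
  refine ⟨hu.1.congr ?_, C, fun x hx => by rw [h x hx]; exact hC x hx⟩
  filter_upwards [ae_restrict_mem (isOpen_Ud d).measurableSet] with x hx using (h x hx).symm

/-- The direction cosines `x_i / ‖x‖` absorb the singular factor `‖x‖⁻²` at the origin. -/
lemma coord_div (i : Fin d) : BddMeas d fun x => x i / eunorm x := by
  refine ⟨?_, 1, fun x _ => ?_⟩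
  · have : Measurable fun x : Fin d → ℝ => x i / eunorm x := by
      unfold eunorm; fun_prop
    exact this.aestronglyMeasurable
  · rw [abs_div, abs_of_nonneg (eunorm_nonneg x)]
    refine div_le_one_of_le₀ (Real.abs_le_sqrt ?_) (eunorm_nonneg x)
    exact Finset.single_le_sum (f := fun i => x i ^ 2) (fun _ _ => sq_nonneg _)
      (Finset.mem_univ i)

lemma integrable_mul (hu : BddMeas d u) {w : (Fin d → ℝ) → ℝ}
    (hw : Integrable w (volume.restrict (Ud d))) :
    Integrable (fun x => u x * w x) (volume.restrict (Ud d)) := by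
  obtain ⟨C, hC⟩ := hu.2
  refine hw.bdd_mul (c := C) hu.1 ?_
  filter_upwards [ae_restrict_mem (isOpen_Ud d).measurableSet] with x hx using hC x hx

end BddMeas

/-- The derivative of a `C^{m+1}` function on the closed ball agrees inside the ball with a
`C^m` function on the closed ball. -/
lemma exists_pd_extension {d : ℕ} {m n : WithTop ℕ∞} (hmn : m + 1 ≤ n) {f : (Fin d → ℝ) → ℝ}
    (hf : ContDiffOn ℝ n f (Bd d)) (i : Fin d) :
    ∃ F : (Fin d → ℝ) → ℝ, ContDiffOn ℝ m F (Bd d) ∧ ∀ x ∈ Ud d, pd i f x = F x := by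
  refine ⟨fun x => fderivWithin ℝ f (Bd d) x (Pi.single i 1),
    (hf.fderivWithin (uniqueDiffOn_Bd d) hmn).clm_apply contDiffOn_const, fun x hx => ?_⟩
  simp only [pd, fderivWithin_of_mem_nhds
    (Filter.mem_of_superset ((isOpen_Ud d).mem_nhds hx) (Ud_subset_Bd d))]

lemma bddMeas_pd {d : ℕ} {n : WithTop ℕ∞} (hn : 1 ≤ n) {f : (Fin d → ℝ) → ℝ}
    (hf : ContDiffOn ℝ n f (Bd d)) (i : Fin d) : BddMeas d (pd i f) := by
  obtain ⟨F, hF, h⟩ := exists_pd_extension (m := 0) (by simpa using hn) hf i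
  exact (BddMeas.of_continuousOn hF.continuousOn).congr h

lemma bddMeas_pd_pd {d : ℕ} {f : (Fin d → ℝ) → ℝ}
    (hf : ContDiffOn ℝ 2 f (Bd d)) (i j : Fin d) : BddMeas d (pd i (pd j f)) := by
  obtain ⟨F, hF, h⟩ := exists_pd_extension (m := 1) (by norm_num) hf j
  refine (bddMeas_pd le_rfl hF i).congr fun x hx => ?_
  have : pd j f =ᶠ[nhds x] F := by
    filter_upwards [(isOpen_Ud d).mem_nhds hx] with y hy using h y hy
  rw [pd, this.fderiv_eq, pd]

lemma bddMeas_coord {d : ℕ} (i : Fin d) : BddMeas d fun x => x i :=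
  BddMeas.of_continuousOn (by fun_prop)

/-! ### Sums over pairs -/

lemma sum_sum_eq_diag_add_two_mul {d : ℕ} (S : Fin d → Fin d → ℝ) (hS : ∀ i j, S i j = S j i) :
    ∑ i, ∑ j, S i j = ∑ i, S i i + 2 * ∑ i, ∑ j ∈ Finset.Ioi i, S i j := by
  have h1 := Finset.sum_sum_Ioi_add_eq_sum_sum_off_diag S
  have h2 : ∀ i, ∑ j, S i j = S i i + ∑ j ∈ {i}ᶜ, S j i := fun i => by
    rw [Fintype.sum_eq_add_sum_compl i]
    simp only [fun j => hS j i]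
  have h3 : ∀ i j, S j i + S i j = 2 * S i j := fun i j => by rw [hS j i]; ring
  simp only [h3, ← Finset.mul_sum] at h1
  simp only [h2, Finset.sum_add_distrib, ← h1]

/-- Lagrange's identity, polarized: `‖x‖² ⟨p, q⟩ = ⟨x, p⟩⟨x, q⟩ + ∑_{i<j} (x∧p)_{ij} (x∧q)_{ij}`. -/
lemma lagrange_identity {d : ℕ} (x p q : Fin d → ℝ) :
    (∑ i, x i ^ 2) * ∑ i, p i * q i = (∑ i, x i * p i) * (∑ i, x i * q i) +
      ∑ i, ∑ j ∈ Finset.Ioi i, (x i * p j - x j * p i) * (x i * q j - x j * q i) := by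
  have h := sum_sum_eq_diag_add_two_mul
    (fun i j => (x i * p j - x j * p i) * (x i * q j - x j * q i)) (fun i j => by ring)
  have e : ∑ i, ∑ j, (x i * p j - x j * p i) * (x i * q j - x j * q i) =
      2 * ((∑ i, x i ^ 2) * ∑ i, p i * q i - (∑ i, x i * p i) * (∑ i, x i * q i)) := by
    have : ∀ i j, (x i * p j - x j * p i) * (x i * q j - x j * q i) =
        x i ^ 2 * (p j * q j) + (p i * q i) * x j ^ 2 - (x i * p i) * (x j * q j)
          - (x i * q i) * (x j * p j) := fun i j => by ring
    simp only [this, Finset.sum_sub_distrib, Finset.sum_add_distrib, ← Finset.mul_sum,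
      ← Finset.sum_mul]
    ring
  rw [e] at h
  simp only [sub_self, mul_zero, Finset.sum_const_zero, zero_add] at h
  linarith

/-! ### Partial derivatives and the flux field -/

section PartialDerivatives

variable {d : ℕ} {u v : (Fin d → ℝ) → ℝ} {x : Fin d → ℝ}

lemma pd_mul (i : Fin d) (hu : DifferentiableAt ℝ u x) (hv : DifferentiableAt ℝ v x) :
    pd i (fun y => u y * v y) x = pd i u x * v x + u x * pd i v x := by
  simp only [pd, fderiv_fun_mul hu hv]
  simp; ring

lemma pd_sub (i : Fin d) (hu : DifferentiableAt ℝ u x) (hv : DifferentiableAt ℝ v x) :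
    pd i (fun y => u y - v y) x = pd i u x - pd i v x := by
  simp [pd, fderiv_fun_sub hu hv]

lemma pd_sum (i : Fin d) {u : Fin d → (Fin d → ℝ) → ℝ}
    (hu : ∀ j, DifferentiableAt ℝ (u j) x) :
    pd i (fun y => ∑ j, u j y) x = ∑ j, pd i (u j) x := by
  simp [pd, fderiv_fun_sum fun j _ => hu j]

lemma pd_coord (i j : Fin d) : pd i (fun y => y j) x = if j = i then 1 else 0 := by
  have h : HasFDerivAt (fun y : Fin d → ℝ => y j)
      (ContinuousLinearMap.proj (R := ℝ) (φ := fun _ : Fin d => ℝ) j) x := hasFDerivAt_apply j x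
  rw [pd, h.fderiv]
  simp [Pi.single_apply]

/-- The gradient of a function of `1 - ‖x‖²` is radial. -/
lemma pd_radial (i : Fin d) {h : ℝ → ℝ} {h' : ℝ} (hh : HasDerivAt h h' (1 - ∑ j, x j ^ 2)) :
    DifferentiableAt ℝ (fun y : Fin d → ℝ => h (1 - ∑ j, y j ^ 2)) x ∧
    pd i (fun y : Fin d → ℝ => h (1 - ∑ j, y j ^ 2)) x = h' * (-2 * x i) := by
  have hq : DifferentiableAt ℝ (fun y : Fin d → ℝ => 1 - ∑ j, y j ^ 2) x := by fun_prop
  have h1 := hh.comp_hasFDerivAt x hq.hasFDerivAt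
  refine ⟨h1.differentiableAt, ?_⟩
  have h2 : pd i (fun y : Fin d → ℝ => 1 - ∑ j, y j ^ 2) x = -2 * x i := by
    rw [pd_sub i (by fun_prop) (by fun_prop), pd_sum i (by fun_prop)]
    have : ∀ j, pd i (fun y : Fin d → ℝ => y j ^ 2) x = if j = i then 2 * x j else 0 := by
      intro j
      simp only [pow_two]
      rw [pd_mul i (by fun_prop) (by fun_prop), pd_coord]
      split_ifs <;> ring
    simp only [this, Finset.sum_ite_eq', Finset.mem_univ, if_true]
    simp [pd]
  have h3 := h1.fderiv
  simp only [Function.comp_def] at h3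
  rw [pd, h3, ← h2]
  simp [pd]

lemma contDiffAt_pd {f : (Fin d → ℝ) → ℝ} (hf : ContDiffAt ℝ 2 f x) (i : Fin d) :
    ContDiffAt ℝ 1 (pd i f) x :=
  (hf.fderiv_right (m := 1) (by norm_num)).clm_apply contDiffAt_const

lemma pd_comm {f : (Fin d → ℝ) → ℝ} (hf : ContDiffAt ℝ 2 f x) (i j : Fin d) :
    pd i (pd j f) x = pd j (pd i f) x := by
  have h : ∀ i j, pd i (pd j f) x =
      fderiv ℝ (fderiv ℝ f) x (Pi.single i 1) (Pi.single j 1) := by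
    intro i j
    have hd : DifferentiableAt ℝ (fderiv ℝ f) x :=
      (hf.fderiv_right (m := 1) (by norm_num)).differentiableAt (by norm_num)
    change fderiv ℝ (fun y => fderiv ℝ f y (Pi.single j 1)) x (Pi.single i 1) = _
    rw [fderiv_clm_apply hd (by fun_prop)]
    simp
  rw [h, h, (hf.isSymmSndFDerivAt (by simp)).eq]

lemma contDiffAt_xgrad {f : (Fin d → ℝ) → ℝ} (hf : ContDiffAt ℝ 2 f x) :
    ContDiffAt ℝ 1 (xgrad f) x :=
  ContDiffAt.sum fun i _ => (contDiff_apply ℝ ℝ i).contDiffAt.mul (contDiffAt_pd hf i)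

/-- The flux field `∇f - ⟨x, ∇f⟩ x`, whose divergence is the unweighted part of `𝒟_μ f`. -/
def flux (f : (Fin d → ℝ) → ℝ) (i : Fin d) (x : Fin d → ℝ) : ℝ := pd i f x - x i * xgrad f x

lemma contDiffAt_flux {f : (Fin d → ℝ) → ℝ} (hf : ContDiffAt ℝ 2 f x) (i : Fin d) :
    ContDiffAt ℝ 1 (flux f i) x :=
  (contDiffAt_pd hf i).sub ((contDiff_apply ℝ ℝ i).contDiffAt.mul (contDiffAt_xgrad hf))

lemma div_flux {f : (Fin d → ℝ) → ℝ} (hf : ContDiffAt ℝ 2 f x) (μ : ℝ) :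
    ∑ i, pd i (flux f i) x = DmuF d μ f x + 2 * μ * xgrad f x := by
  have dp : ∀ i, DifferentiableAt ℝ (pd i f) x := fun i =>
    (contDiffAt_pd hf i).differentiableAt (by norm_num)
  have dx : DifferentiableAt ℝ (xgrad f) x := (contDiffAt_xgrad hf).differentiableAt (by norm_num)
  have h1 : ∀ i, pd i (xgrad f) x = pd i f x + ∑ j, x j * pd i (pd j f) x := by
    intro i
    change pd i (fun y => ∑ j, y j * pd j f y) x = _
    rw [pd_sum i fun j => DifferentiableAt.fun_mul (by fun_prop) (dp j)]
    have : ∀ j, pd i (fun y => y j * pd j f y) x =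
        (if j = i then pd j f x else 0) + x j * pd i (pd j f) x := by
      intro j
      rw [pd_mul i (by fun_prop) (dp j), pd_coord]
      split_ifs <;> simp
    simp [this, Finset.sum_add_distrib]
  have h2 : ∀ i, pd i (flux f i) x =
      pd i (pd i f) x - xgrad f x - x i * pd i f x - ∑ j, x i * x j * pd i (pd j f) x := by
    intro i
    change pd i (fun y => pd i f y - y i * xgrad f y) x = _
    rw [pd_sub i (dp i) (DifferentiableAt.fun_mul (by fun_prop) dx), pd_mul i (by fun_prop) dx, pd_coord,
      h1, mul_add, Finset.mul_sum]
    simp only [if_true, mul_assoc]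
    ring
  have h3 := sum_sum_eq_diag_add_two_mul (fun i j => x i * x j * pd i (pd j f) x)
    (fun i j => by rw [pd_comm hf i j]; ring)
  simp only [h2, Finset.sum_sub_distrib, h3]
  simp only [DmuF, xgrad, sub_mul, Finset.sum_sub_distrib, Finset.sum_const, Finset.card_univ,
    Fintype.card_fin, nsmul_eq_mul, one_mul, pow_two]
  ring

lemma sum_coord_mul_flux (f : (Fin d → ℝ) → ℝ) :
    ∑ i, x i * flux f i x = (1 - ∑ i, x i ^ 2) * xgrad f x := by
  have : ∀ i, x i * flux f i x = x i * pd i f x - x i ^ 2 * xgrad f x := fun i => by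
    unfold flux; ring
  simp only [this, Finset.sum_sub_distrib, ← Finset.sum_mul]
  rw [sub_mul, one_mul]
  rfl

lemma sum_pd_mul_flux (f g : (Fin d → ℝ) → ℝ) :
    ∑ i, pd i g x * flux f i x = ∑ i, pd i f x * pd i g x - xgrad f x * xgrad g x := by
  have : ∀ i, pd i g x * flux f i x = pd i f x * pd i g x - xgrad f x * (x i * pd i g x) :=
    fun i => by unfold flux; ring
  simp only [this, Finset.sum_sub_distrib, ← Finset.mul_sum]
  rfl

end PartialDerivatives

/-! ### The truncated field -/

/-- A smooth cutoff on the line: `0` on `(-∞, 1]` and `1` on `[2, ∞)`. -/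
def cutoff (t : ℝ) : ℝ := Real.smoothTransition (t - 1)

lemma contDiff_cutoff : ContDiff ℝ 2 cutoff :=
  (Real.smoothTransition.contDiff (n := 2)).comp (contDiff_id.sub contDiff_const)

lemma cutoff_of_le {t : ℝ} (h : t ≤ 1) : cutoff t = 0 :=
  Real.smoothTransition.zero_of_nonpos (by linarith)

lemma cutoff_of_ge {t : ℝ} (h : 2 ≤ t) : cutoff t = 1 :=
  Real.smoothTransition.one_of_one_le (by linarith)

lemma deriv_cutoff_of_gt {t : ℝ} (h : 2 < t) : deriv cutoff t = 0 := by
  have : cutoff =ᶠ[nhds t] fun _ => 1 := by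
    filter_upwards [lt_mem_nhds h] with s hs using cutoff_of_ge hs.le
  rw [this.deriv_eq]; simp

lemma continuous_deriv_cutoff : Continuous (deriv cutoff) :=
  contDiff_cutoff.continuous_deriv (by norm_num)

lemma exists_bound_mul_deriv_cutoff : ∃ C, ∀ t, 0 ≤ t → |t * deriv cutoff t| ≤ C := by
  obtain ⟨C, hC⟩ := (isCompact_Icc (a := (0 : ℝ)) (b := 2)).exists_bound_of_continuousOn
    (f := fun t => t * deriv cutoff t)
    (continuous_id.mul continuous_deriv_cutoff).continuousOn
  refine ⟨C, fun t ht => ?_⟩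
  rcases le_or_gt t 2 with h | h
  · exact hC t ⟨ht, h⟩
  · rw [deriv_cutoff_of_gt h, mul_zero, abs_zero]
    exact (norm_nonneg _).trans (hC 0 ⟨le_rfl, by norm_num⟩)

lemma abs_cutoff_le (t : ℝ) : |cutoff t| ≤ 1 :=
  abs_le.2 ⟨(by norm_num : (-1 : ℝ) ≤ 0).trans (Real.smoothTransition.nonneg _),
    Real.smoothTransition.le_one _⟩

/-- The weight cut off to the compact set `n (1 - ‖x‖²) ≥ 1`. -/
def cutW (d : ℕ) (μ : ℝ) (n : ℕ) (x : Fin d → ℝ) : ℝ :=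
  cutoff (n * (1 - ∑ j, x j ^ 2)) * (1 - ∑ j, x j ^ 2) ^ μ

lemma contDiffAt_cutW {d : ℕ} (μ : ℝ) (n : ℕ) {x : Fin d → ℝ} (hx : x ∈ Ud d) :
    ContDiffAt ℝ 1 (cutW d μ n) x := by
  have h0 : ContDiffAt ℝ 1 (fun y : Fin d → ℝ => 1 - ∑ j, y j ^ 2) x := by fun_prop
  refine ContDiffAt.mul ?_ (h0.rpow_const_of_ne (sub_pos.2 hx).ne')
  exact (contDiff_cutoff.of_le (by norm_num)).contDiffAt.comp x (contDiffAt_const.mul h0)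

lemma pd_cutW {d : ℕ} (μ : ℝ) (n : ℕ) {x : Fin d → ℝ} (hx : x ∈ Ud d) (i : Fin d) :
    pd i (cutW d μ n) x = (n * deriv cutoff (n * (1 - ∑ j, x j ^ 2)) * (1 - ∑ j, x j ^ 2) ^ μ +
      cutoff (n * (1 - ∑ j, x j ^ 2)) * (μ * (1 - ∑ j, x j ^ 2) ^ (μ - 1))) * (-2 * x i) := by
  have ht : 0 < 1 - ∑ j, x j ^ 2 := sub_pos.2 hx
  refine (pd_radial i (h := fun t => cutoff (n * t) * t ^ μ) ?_).2
  refine HasDerivAt.mul ?_ ?_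
  · have h1 : HasDerivAt cutoff (deriv cutoff (n * (1 - ∑ j, x j ^ 2)))
        (n * (1 - ∑ j, x j ^ 2)) :=
      (contDiff_cutoff.differentiable (by norm_num) _).hasDerivAt
    have := h1.comp (1 - ∑ j, x j ^ 2) ((hasDerivAt_id _).const_mul (n : ℝ))
    simpa [Function.comp_def, mul_comm] using this
  · exact Real.hasDerivAt_rpow_const (Or.inl ht.ne')

/-- Divergence of the truncated field `φ_n W_μ g (∇f - ⟨x, ∇f⟩ x)`. The derivative of the cutoff
only meets the radial component of the field, which carries a factor `1 - ‖x‖²`. -/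
lemma div_truncated {d : ℕ} (μ : ℝ) (n : ℕ) {f g : (Fin d → ℝ) → ℝ} {x : Fin d → ℝ}
    (hx : x ∈ Ud d) (hf : ContDiffAt ℝ 2 f x) (hg : DifferentiableAt ℝ g x) :
    ∑ i, pd i (fun y => cutW d μ n y * (g y * flux f i y)) x =
      (cutoff (n * (1 - ∑ j, x j ^ 2)) *
          (DmuF d μ f x * g x + (∑ i, pd i f x * pd i g x - xgrad f x * xgrad g x)) -
        2 * (n * (1 - ∑ j, x j ^ 2) * deriv cutoff (n * (1 - ∑ j, x j ^ 2))) *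
          (g x * xgrad f x)) * Wmu d μ x := by
  have dW : DifferentiableAt ℝ (cutW d μ n) x :=
    (contDiffAt_cutW μ n hx).differentiableAt (by norm_num)
  have dF : ∀ i, DifferentiableAt ℝ (flux f i) x := fun i =>
    (contDiffAt_flux hf i).differentiableAt (by norm_num)
  have h1 : ∀ i, pd i (fun y => cutW d μ n y * (g y * flux f i y)) x =
      (n * deriv cutoff (n * (1 - ∑ j, x j ^ 2)) * (1 - ∑ j, x j ^ 2) ^ μ +
        cutoff (n * (1 - ∑ j, x j ^ 2)) * (μ * (1 - ∑ j, x j ^ 2) ^ (μ - 1))) * (-2) * g x *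
          (x i * flux f i x) +
      cutW d μ n x * (pd i g x * flux f i x) + cutW d μ n x * g x * pd i (flux f i) x := by
    intro i
    rw [pd_mul i dW (hg.fun_mul (dF i)), pd_mul i hg (dF i), pd_cutW μ n hx]
    ring
  simp only [h1, Finset.sum_add_distrib, ← Finset.mul_sum]
  rw [sum_coord_mul_flux, sum_pd_mul_flux, div_flux hf μ]
  have ht : 0 < 1 - ∑ j, x j ^ 2 := sub_pos.2 hx
  have hW : Wmu d μ x = (1 - ∑ j, x j ^ 2) ^ μ := by rw [Wmu, eunorm_sq]
  have hW1 : (1 - ∑ j, x j ^ 2) ^ (μ - 1) * (1 - ∑ j, x j ^ 2) = (1 - ∑ j, x j ^ 2) ^ μ := by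
    rw [← Real.rpow_add_one ht.ne', sub_add_cancel]
  rw [hW, cutW, ← hW1]
  ring

lemma integral_pd_eq_zero {d : ℕ} {V : (Fin d → ℝ) → ℝ} (hV : ContDiff ℝ 1 V)
    (hc : HasCompactSupport V) (i : Fin d) :
    Integrable (pd i V) ∧ ∫ x, pd i V x = 0 := by
  have hi : Integrable (fun x => fderiv ℝ V x (Pi.single i 1)) := by
    refine Continuous.integrable_of_hasCompactSupport ?_ ?_
    · exact (hV.continuous_fderiv (by norm_num)).clm_apply continuous_const
    · exact (hc.fderiv (𝕜 := ℝ)).comp_left (g := fun L : (Fin d → ℝ) →L[ℝ] ℝ =>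
        L (Pi.single i 1)) (by simp)
  refine ⟨hi, ?_⟩
  have := integral_mul_fderiv_eq_neg_fderiv_mul_of_integrable (μ := volume) (f := fun _ => (1 : ℝ))
    (g := V) (v := Pi.single i 1) (by simp) (by simpa using hi)
    (by simpa using hV.continuous.integrable_of_hasCompactSupport hc) (by simp)
    (fun x _ => hV.differentiable (by norm_num) x)
  simpa [pd] using this

section Truncated

variable {d : ℕ} {f g : (Fin d → ℝ) → ℝ}

lemma contDiffAt_of_mem_Ud {n : WithTop ℕ∞} (hf : ContDiffOn ℝ n f (Bd d)) {x : Fin d → ℝ}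
    (hx : x ∈ Ud d) : ContDiffAt ℝ n f x :=
  hf.contDiffAt (Filter.mem_of_superset ((isOpen_Ud d).mem_nhds hx) (Ud_subset_Bd d))

/-- The truncated field has integral-zero divergence, since it is `C¹` with compact support
inside the open ball. -/
lemma integral_div_truncated (μ : ℝ) (n : ℕ)
    (hf : ContDiffOn ℝ 2 f (Bd d)) (hg : ContDiffOn ℝ 2 g (Bd d)) :
    ∫ x in Ud d, ∑ i, pd i (fun y => cutW d μ n y * (g y * flux f i y)) x = 0 := by
  set K : Set (Fin d → ℝ) := {x | 1 ≤ n * (1 - ∑ j, x j ^ 2)} with hK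
  have hKU : K ⊆ Ud d := fun x (hx : 1 ≤ n * (1 - ∑ j, x j ^ 2)) => by
    have : 0 < 1 - ∑ j, x j ^ 2 := by
      by_contra! h
      have := mul_nonpos_of_nonneg_of_nonpos (Nat.cast_nonneg (α := ℝ) n) h
      linarith
    exact sub_pos.1 this
  have hKc : IsClosed K := isClosed_le continuous_const (by fun_prop)
  have hKcpt : IsCompact K :=
    (isCompact_Bd d).of_isClosed_subset hKc (hKU.trans (Ud_subset_Bd d))
  have hz : ∀ i, ∀ x ∉ K, cutW d μ n x * (g x * flux f i x) = 0 := by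
    intro i x hx
    rw [cutW, cutoff_of_le (not_le.1 hx).le]
    ring
  have hz' : ∀ i, ∀ x ∉ K, (fun y => cutW d μ n y * (g y * flux f i y)) =ᶠ[nhds x] fun _ => 0 := by
    intro i x hx
    filter_upwards [hKc.isOpen_compl.mem_nhds hx] with y hy using hz i y hy
  have hV : ∀ i, ContDiff ℝ 1 fun y => cutW d μ n y * (g y * flux f i y) := by
    intro i
    rw [contDiff_iff_contDiffAt]
    intro x
    by_cases hx : x ∈ K
    · have hxU := hKU hx
      exact (contDiffAt_cutW μ n hxU).mul (((contDiffAt_of_mem_Ud hg hxU).of_le (by norm_num)).mul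
        (contDiffAt_flux (contDiffAt_of_mem_Ud hf hxU) i))
    · exact contDiffAt_const.congr_of_eventuallyEq (hz' i x hx)
  have hcs : ∀ i, HasCompactSupport fun y => cutW d μ n y * (g y * flux f i y) := fun i =>
    HasCompactSupport.intro hKcpt (hz i)
  rw [setIntegral_eq_integral_of_forall_compl_eq_zero]
  · rw [integral_finsetSum _ fun i _ => (integral_pd_eq_zero (hV i) (hcs i) i).1]
    exact Finset.sum_eq_zero fun i _ => (integral_pd_eq_zero (hV i) (hcs i) i).2
  · intro x hx
    refine Finset.sum_eq_zero fun i _ => ?_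
    rw [pd, (hz' i x fun h => hx (hKU h)).fderiv_eq]
    simp

end Truncated

/-! ### Removing the cutoff -/

section Main

variable {d : ℕ} {f g : (Fin d → ℝ) → ℝ}

lemma bddMeas_xgrad (hf : ContDiffOn ℝ 2 f (Bd d)) : BddMeas d (xgrad f) :=
  BddMeas.sum _ fun i => (bddMeas_coord i).mul (bddMeas_pd (by norm_num) hf i)

lemma bddMeas_DmuF (μ : ℝ) (hf : ContDiffOn ℝ 2 f (Bd d)) : BddMeas d (DmuF d μ f) := by
  refine BddMeas.sub (BddMeas.sub ?_ ((BddMeas.const 2).mul ?_))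
    ((BddMeas.const _).mul (bddMeas_xgrad hf))
  · refine BddMeas.sum _ fun i => BddMeas.mul ?_ (bddMeas_pd_pd hf i i)
    exact BddMeas.of_continuousOn (by fun_prop)
  · exact BddMeas.sum _ fun i => BddMeas.sum _ fun j =>
      ((bddMeas_coord i).mul (bddMeas_coord j)).mul (bddMeas_pd_pd hf i j)

lemma bddMeas_dirichlet (hf : ContDiffOn ℝ 2 f (Bd d)) (hg : ContDiffOn ℝ 2 g (Bd d)) :
    BddMeas d fun x => ∑ i, pd i f x * pd i g x - xgrad f x * xgrad g x :=
  (BddMeas.sum _ fun i => (bddMeas_pd (by norm_num) hf i).mul (bddMeas_pd (by norm_num) hg i)).sub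
    ((bddMeas_xgrad hf).mul (bddMeas_xgrad hg))

/-- Green's formula `∫ (𝒟_μ f · g + ⟨∇f, ∇g⟩ - ⟨x,∇f⟩⟨x,∇g⟩) W_μ = 0`, by removing the cutoff.
The error term is dominated because `t ↦ t η'(t)` is bounded for the cutoff `η`. -/
lemma green_formula (hd : 2 ≤ d) {μ : ℝ} (hμ : -1 < μ)
    (hf : ContDiffOn ℝ 2 f (Bd d)) (hg : ContDiffOn ℝ 2 g (Bd d)) :
    ∫ x in Ud d, (DmuF d μ f x * g x +
      (∑ i, pd i f x * pd i g x - xgrad f x * xgrad g x)) * Wmu d μ x = 0 := by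
  have hmU : MeasurableSet (Ud d) := (isOpen_Ud d).measurableSet
  have hW := integrable_Wmu hd hμ
  have bg : BddMeas d g := BddMeas.of_continuousOn hg.continuousOn
  have bG := ((bddMeas_DmuF μ hf).mul bg).add (bddMeas_dirichlet hf hg)
  have bH := bg.mul (bddMeas_xgrad hf)
  set G : (Fin d → ℝ) → ℝ := fun x => DmuF d μ f x * g x +
      (∑ i, pd i f x * pd i g x - xgrad f x * xgrad g x) with hG
  set H : (Fin d → ℝ) → ℝ := fun x => g x * xgrad f x with hH
  set F : ℕ → (Fin d → ℝ) → ℝ := fun n x =>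
    (cutoff (n * (1 - ∑ j, x j ^ 2)) * G x -
      2 * (n * (1 - ∑ j, x j ^ 2) * deriv cutoff (n * (1 - ∑ j, x j ^ 2))) * H x) * Wmu d μ x
    with hF
  have hF0 : ∀ n, ∫ x in Ud d, F n x = 0 := by
    intro n
    rw [← integral_div_truncated μ n hf hg]
    refine setIntegral_congr_fun hmU fun x hx => ?_
    exact (div_truncated μ n hx (contDiffAt_of_mem_Ud hf hx)
      ((contDiffAt_of_mem_Ud hg hx).differentiableAt (by norm_num))).symm
  obtain ⟨C, hC⟩ := exists_bound_mul_deriv_cutoff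
  obtain ⟨CG, hCG⟩ := bG.2
  obtain ⟨CH, hCH⟩ := bH.2
  have hlim : Filter.Tendsto (fun n => ∫ x in Ud d, F n x) Filter.atTop
      (nhds (∫ x in Ud d, G x * Wmu d μ x)) := by
    refine tendsto_integral_of_dominated_convergence
      (fun x => (CG + 2 * C * CH) * ‖Wmu d μ x‖) ?_ (hW.norm.const_mul _) ?_ ?_
    · intro n
      have c1 : Continuous fun x : Fin d → ℝ => cutoff (n * (1 - ∑ j, x j ^ 2)) :=
        contDiff_cutoff.continuous.comp (by fun_prop)
      have c2 : Continuous fun x : Fin d → ℝ =>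
          2 * (n * (1 - ∑ j, x j ^ 2) * deriv cutoff (n * (1 - ∑ j, x j ^ 2))) := by
        have := continuous_deriv_cutoff
        fun_prop
      exact ((c1.aestronglyMeasurable.mul bG.1).sub (c2.aestronglyMeasurable.mul bH.1)).mul hW.1
    · intro n
      filter_upwards [ae_restrict_mem hmU] with x hx
      have ht : 0 ≤ n * (1 - ∑ j, x j ^ 2) :=
        mul_nonneg (Nat.cast_nonneg n) (sub_pos.2 hx).le
      rw [hF, norm_mul]
      refine mul_le_mul_of_nonneg_right ?_ (norm_nonneg _)
      refine (norm_sub_le _ _).trans (add_le_add ?_ ?_)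
      · rw [norm_mul]
        calc _ ≤ 1 * CG := mul_le_mul (abs_cutoff_le _) (hCG x hx) (abs_nonneg _) zero_le_one
          _ = CG := one_mul _
      · rw [norm_mul, norm_mul, Real.norm_ofNat]
        have hC' := hC _ ht
        refine mul_le_mul ?_ (hCH x hx) (norm_nonneg _) ?_
        · exact mul_le_mul_of_nonneg_left hC' zero_le_two
        · linarith [(abs_nonneg _).trans hC']
    · filter_upwards [ae_restrict_mem hmU] with x hx
      have ht : 0 < 1 - ∑ j, x j ^ 2 := sub_pos.2 hx
      have htop : Filter.Tendsto (fun n : ℕ => (n : ℝ) * (1 - ∑ j, x j ^ 2))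
          Filter.atTop Filter.atTop :=
        tendsto_natCast_atTop_atTop.atTop_mul_const ht
      refine tendsto_const_nhds.congr' ?_
      filter_upwards [htop.eventually_gt_atTop 2] with n hn
      simp only [hF, cutoff_of_ge hn.le, deriv_cutoff_of_gt hn]
      ring
  simp only [hF0] at hlim
  exact (tendsto_nhds_unique hlim tendsto_const_nhds)

lemma integrable_radial_term (hd : 2 ≤ d) {μ : ℝ} (hμ : -1 < μ)
    (hf : ContDiffOn ℝ 2 f (Bd d)) (hg : ContDiffOn ℝ 2 g (Bd d)) :
    Integrable (fun x => xgrad f x * xgrad g x * (1 - eunorm x ^ 2) * Wmu d μ x / eunorm x ^ 2)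
      (volume.restrict (Ud d)) := by
  have b : ∀ {u : (Fin d → ℝ) → ℝ}, ContDiffOn ℝ 2 u (Bd d) →
      BddMeas d fun x => xgrad u x / eunorm x := fun {u} hu => by
    refine (BddMeas.sum Finset.univ fun i =>
      (BddMeas.coord_div i).mul (bddMeas_pd (by norm_num) hu i)).congr fun x _ => ?_
    rw [xgrad, Finset.sum_div]
    exact Finset.sum_congr rfl fun i _ => by ring
  have b1 : BddMeas d fun x => 1 - eunorm x ^ 2 := by
    simp only [eunorm_sq]
    exact BddMeas.of_continuousOn (by fun_prop)
  refine ((((b hf).mul (b hg)).mul b1).integrable_mul (integrable_Wmu hd hμ)).congr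
    (Filter.Eventually.of_forall fun x => ?_)
  simp only
  ring

lemma integrable_angular_term (hd : 2 ≤ d) {μ : ℝ} (hμ : -1 < μ)
    (hf : ContDiffOn ℝ 2 f (Bd d)) (hg : ContDiffOn ℝ 2 g (Bd d)) (i j : Fin d) :
    Integrable (fun x => DijF i j f x * DijF i j g x * Wmu d μ x / eunorm x ^ 2)
      (volume.restrict (Ud d)) := by
  have b : ∀ {u : (Fin d → ℝ) → ℝ}, ContDiffOn ℝ 2 u (Bd d) →
      BddMeas d fun x => DijF i j u x / eunorm x := fun {u} hu => by
    refine (((BddMeas.coord_div i).mul (bddMeas_pd (by norm_num) hu j)).sub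
      ((BddMeas.coord_div j).mul (bddMeas_pd (by norm_num) hu i))).congr fun x _ => ?_
    rw [DijF]
    ring
  refine (((b hf).mul (b hg)).integrable_mul (integrable_Wmu hd hμ)).congr
    (Filter.Eventually.of_forall fun x => ?_)
  simp only
  ring

end Main

/-- the integral identity
`−∫_{B^d} 𝒟_μ f · g W_μ = ∫_{B^d} ⟨x,∇⟩f ⟨x,∇⟩g (1−‖x‖²) W_μ ‖x‖^{−2}
 + Σ_{i<j} ∫_{B^d} D_{i,j}f D_{i,j}g W_μ ‖x‖^{−2}`
for `f, g` twice continuously differentiable on the closed unit ball. -/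
theorem stmt6 (d : ℕ) (hd : 2 ≤ d) (μ : ℝ) (hμ : -1 < μ)
    (f g : (Fin d → ℝ) → ℝ)
    (hf : ContDiffOn ℝ 2 f (Bd d)) (hg : ContDiffOn ℝ 2 g (Bd d)) :
    -∫ x in Bd d, DmuF d μ f x * g x * Wmu d μ x =
      (∫ x in Bd d,
        xgrad f x * xgrad g x * (1 - eunorm x ^ 2) * Wmu d μ x / eunorm x ^ 2)
      + ∑ i, ∑ j ∈ Finset.Ioi i,
          ∫ x in Bd d, DijF i j f x * DijF i j g x * Wmu d μ x / eunorm x ^ 2 := by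
  have : NeZero d := ⟨by omega⟩
  have hW := integrable_Wmu hd hμ
  have bg : BddMeas d g := BddMeas.of_continuousOn hg.continuousOn
  have green := green_formula hd hμ hf hg
  simp only [add_mul] at green
  rw [integral_add (((bddMeas_DmuF μ hf).mul bg).integrable_mul hW)
    ((bddMeas_dirichlet hf hg).integrable_mul hW)] at green
  rw [restrict_Bd hd, neg_eq_of_add_eq_zero_right green]
  have e : ∀ i, ∑ j ∈ Finset.Ioi i, ∫ x in Ud d, DijF i j f x * DijF i j g x * Wmu d μ x /
      eunorm x ^ 2 = ∫ x in Ud d, ∑ j ∈ Finset.Ioi i, DijF i j f x * DijF i j g x * Wmu d μ x /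
      eunorm x ^ 2 := fun i =>
    (integral_finsetSum _ fun j _ => integrable_angular_term hd hμ hf hg i j).symm
  have hi : ∀ i, Integrable (fun x => ∑ j ∈ Finset.Ioi i, DijF i j f x * DijF i j g x *
      Wmu d μ x / eunorm x ^ 2) (volume.restrict (Ud d)) := fun i =>
    integrable_finsetSum _ fun j _ => integrable_angular_term hd hμ hf hg i j
  simp only [e]
  rw [← integral_finsetSum _ fun i _ => hi i,
    ← integral_add (integrable_radial_term hd hμ hf hg) (integrable_finsetSum _ fun i _ => hi i)]
  -- At the origin the two integrands may differ: division by `‖x‖² = 0` yields `0`.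
  have h0 : ∀ᵐ x ∂(volume : Measure (Fin d → ℝ)).restrict (Ud d), x ≠ 0 :=
    ae_restrict_of_ae (by simp [ae_iff])
  refine integral_congr_ae ?_
  filter_upwards [h0] with x hx
  have hr : eunorm x ^ 2 ≠ 0 := by
    rw [eunorm_sq]
    intro h
    rw [Finset.sum_eq_zero_iff_of_nonneg fun _ _ => sq_nonneg _] at h
    exact hx (funext fun i => by simpa using h i (Finset.mem_univ i))
  have hl := lagrange_identity x (fun i => pd i f x) (fun i => pd i g x)
  rw [← eunorm_sq] at hl
  simp only [← Finset.sum_div, ← Finset.sum_mul]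
  change _ = _ * (xgrad g x) + ∑ i, ∑ j ∈ Finset.Ioi i, DijF i j f x * DijF i j g x at hl
  change _ = xgrad f x * _ + _ at hl
  rw [← add_div, eq_div_iff hr]
  linear_combination Wmu d μ x * hl

end
end

section
/- Let d ≥ 2, μ > −1, and let n ≥ 0 be an even integer. Then for every polynomial f in d variables of total degree at most n, ‖ (√(1−‖x‖²)/‖x‖) ⟨x,∇⟩f ‖_{μ,2} ≤ √(n(n+2μ+d)) ‖f‖_{μ,2}, and the inequality is sharp: equality is attained by a nonzero polynomial of degree n. -/
/-!
Along a line through the origin `f` restricts to a univariate polynomial `g` of degree at most `n`,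
and `(√(1-‖x‖²)/‖x‖) ⟨x,∇⟩f` becomes, up to sign, `√(1-r²) g'(r)`. In polar coordinates, with
antipodal directions grouped together, the claim therefore reduces to
`∫₀¹ (g'(r)² + g'(-r)²) (1-r²)^(μ+1) r^k dr ≤ n(n+2μ+k+1) ∫₀¹ (g(r)² + g(-r)²) (1-r²)^μ r^k dr`
with `k = d - 1` (`diameter_ineq`). Grouping `r` with `-r` decouples the even and odd parts of `g`.

* Even part, `g(r) = h(r²)` with `deg h ≤ m = n/2`: the form on the left is represented by a
  Jacobi operator (`radial_form_eq`) that is triangular on monomials with increasing eigenvalues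
  `2m(2m+2μ+k+1)`. Subtracting from `h` a multiple of the top eigenpolynomial does not change the
  difference of the two sides and lowers the degree, whence an induction on `m` (`even_ineq`).
* Odd part, `g(r) = r b(r)` with `b` even of degree at most `n - 2`: an integration by parts turns
  the form of `g` into that of `b` for the weight with `k + 2`, plus `2(μ+1)` times the squared norm
  of `g`, minus a nonnegative term (`odd_ineq`).

Equality holds for `f(x) = p(‖x‖²)` with `p` the eigenpolynomial of degree `n/2`, since then all
restrictions to lines are the same extremal `g`. The passage to polar coordinates is carried out
with lower Lebesgue integrals (`ball_lintegral`), so that integrability enters only through the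
finiteness of `‖f‖_{μ,2}` (`lintegral_sq_evalP_ne_top`).
-/


open MeasureTheory Real MvPolynomial Finset
open scoped ENNReal

noncomputable section

/-! ### The radial functional -/

lemma weight_intervalIntegrable {μ : ℝ} (hμ : -1 < μ) :
    IntervalIntegrable (fun r : ℝ => (1 - r ^ 2) ^ μ) volume 0 1 := by
  have h1 : IntervalIntegrable (fun r : ℝ => (1 - r) ^ μ) volume 0 1 := by
    have := (intervalIntegral.intervalIntegrable_rpow' hμ (a := 0) (b := 1)).comp_sub_left 1
    simpa using this.symm
  have h2 : ContinuousOn (fun r : ℝ => (1 + r) ^ μ) (Set.uIcc 0 1) := by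
    rw [Set.uIcc_of_le zero_le_one]
    intro r hr
    refine ContinuousAt.continuousWithinAt ?_
    refine ContinuousAt.rpow_const (by fun_prop) (Or.inl ?_)
    have := hr.1
    positivity
  refine (h1.mul_continuousOn h2).congr ?_
  intro r hr
  rw [Set.uIoc_of_le zero_le_one] at hr
  simp only
  rw [← Real.mul_rpow (by linarith [hr.2]) (by linarith [hr.1])]
  ring_nf

lemma poly_mul_weight_intervalIntegrable {μ : ℝ} (hμ : -1 < μ) (q : Polynomial ℝ) :
    IntervalIntegrable (fun r : ℝ => q.eval r * (1 - r ^ 2) ^ μ) volume 0 1 :=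
  (weight_intervalIntegrable hμ).continuousOn_mul q.continuous.continuousOn

/-- The linear functional `q ↦ ∫₀¹ q(r) (1 - r²)^μ dr` on real polynomials. -/
def radialJ (μ : ℝ) (hμ : -1 < μ) : Polynomial ℝ →ₗ[ℝ] ℝ where
  toFun q := ∫ r in (0 : ℝ)..1, q.eval r * (1 - r ^ 2) ^ μ
  map_add' p q := by
    simp only [Polynomial.eval_add, add_mul]
    exact intervalIntegral.integral_add (poly_mul_weight_intervalIntegrable hμ p)
      (poly_mul_weight_intervalIntegrable hμ q)
  map_smul' c q := by
    simp only [Polynomial.eval_smul, smul_eq_mul, mul_assoc, RingHom.id_apply]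
    exact intervalIntegral.integral_const_mul _ _

lemma radialJ_apply (μ : ℝ) (hμ : -1 < μ) (q : Polynomial ℝ) :
    radialJ μ hμ q = ∫ r in (0 : ℝ)..1, q.eval r * (1 - r ^ 2) ^ μ := rfl

lemma radialJ_nonneg (μ : ℝ) (hμ : -1 < μ) (q : Polynomial ℝ)
    (hq : ∀ r : ℝ, 0 < r → r < 1 → 0 ≤ q.eval r) : 0 ≤ radialJ μ hμ q := by
  rw [radialJ_apply, intervalIntegral.integral_of_le zero_le_one, integral_Ioc_eq_integral_Ioo]
  refine setIntegral_nonneg measurableSet_Ioo fun r hr => ?_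
  exact mul_nonneg (hq r hr.1 hr.2) (Real.rpow_nonneg (by nlinarith [hr.1, hr.2]) _)

/-- Integration by parts: `(1 - r²)^(μ+1) q(r)` vanishes at both ends of `[0, 1]`. -/
lemma radialJ_ibp (μ : ℝ) (hμ : -1 < μ) (q : Polynomial ℝ) (hq : q.eval 0 = 0) :
    radialJ μ hμ ((1 - Polynomial.X ^ 2) * q.derivative
      - (2 * (μ + 1)) • (Polynomial.X * q)) = 0 := by
  rw [radialJ_apply]
  rw [intervalIntegral.integral_eq_sub_of_hasDerivAt_of_le zero_le_one
    (f := fun r => (1 - r ^ 2) ^ (μ + 1) * q.eval r)]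
  · simp [hq, Real.zero_rpow (by linarith : μ + 1 ≠ 0)]
  · refine ContinuousOn.mul ?_ q.continuous.continuousOn
    exact ContinuousOn.rpow_const (by fun_prop) fun r _ => Or.inr (by linarith)
  · intro r hr
    have hpos : 0 < 1 - r ^ 2 := by nlinarith [hr.1, hr.2]
    have h1 : HasDerivAt (fun r : ℝ => 1 - r ^ 2) (-(2 * r)) r := by
      simpa using (hasDerivAt_pow 2 r).const_sub 1
    have h2 := (h1.rpow_const (p := μ + 1) (Or.inl hpos.ne')).mul (q.hasDerivAt r)
    refine h2.congr_deriv ?_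
    rw [Real.rpow_add hpos, Real.rpow_one]
    simp
    ring
  · exact poly_mul_weight_intervalIntegrable hμ _

/-! ### The Jacobi operator on even polynomials -/

/-- The Jacobi-type operator governing `h ↦ h(r²)`: if `g(r) = h(r²)` and
`w(r) = r^k (1 - r²)^μ`, then `-((1 - r²) w g')' / w` is `(jacobiOp k μ h)(r²)`. -/
def jacobiOp (k : ℕ) (μ : ℝ) (h : Polynomial ℝ) : Polynomial ℝ :=
  (4 * (μ + 1)) • (Polynomial.X * h.derivative)
    - (1 - Polynomial.X) * ((2 + 2 * k : ℝ) • h.derivative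
      + (4 : ℝ) • (Polynomial.X * h.derivative.derivative))

/-- The `j`-th eigenvalue of `jacobiOp k μ`. -/
def jacobiEig (k : ℕ) (μ : ℝ) (j : ℕ) : ℝ := 2 * j * (2 * j + 2 * μ + k + 1)

lemma jacobiEig_lt {k : ℕ} (hk : 1 ≤ k) {μ : ℝ} (hμ : -1 < μ) {i j : ℕ} (hij : i < j) :
    jacobiEig k μ i < jacobiEig k μ j := by
  unfold jacobiEig
  have h1 : (i : ℝ) < j := by exact_mod_cast hij
  have h2 : (1 : ℝ) ≤ k := by exact_mod_cast hk
  have h3 : (0 : ℝ) ≤ i := by positivity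
  nlinarith [mul_pos (sub_pos.2 h1) (by linarith : (0 : ℝ) < 2 * (i + j) + (2 * μ + k + 1))]

/-- In the monomial basis the operator is triangular, with the eigenvalues on the diagonal. -/
lemma coeff_jacobiOp (k : ℕ) (μ : ℝ) (h : Polynomial ℝ) (i : ℕ) :
    (jacobiOp k μ h).coeff i
      = jacobiEig k μ i * h.coeff i - 2 * (i + 1) * (2 * i + k + 1) * h.coeff (i + 1) := by
  unfold jacobiOp jacobiEig
  rcases i with _ | _ | i
  · simp [sub_mul, Polynomial.coeff_derivative]
    left
    ring
  all_goals
    simp [sub_mul, Polynomial.coeff_derivative, Polynomial.coeff_X_mul]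
    ring

/-- A monic eigenpolynomial of degree `m`; its coefficients solve the two-term recursion
that the triangular form of the operator gives. -/
lemma exists_jacobi_eigen {k : ℕ} (hk : 1 ≤ k) {μ : ℝ} (hμ : -1 < μ) (m : ℕ) :
    ∃ p : Polynomial ℝ, p.natDegree ≤ m ∧ p.coeff m = 1 ∧
      jacobiOp k μ p = jacobiEig k μ m • p := by
  set c : ℕ → ℝ := fun i => if i ≤ m then ∏ j ∈ Finset.Ico i m,
    (-(2 * (j + 1) * (2 * j + k + 1)) / (jacobiEig k μ m - jacobiEig k μ j)) else 0 with hc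
  have hcoeff : ∀ i, (∑ i ∈ Finset.range (m + 1), Polynomial.monomial i (c i)).coeff i = c i := by
    intro i
    simp only [Polynomial.finsetSum_coeff, Polynomial.coeff_monomial]
    rw [Finset.sum_ite_eq' (Finset.range (m + 1)) i c]
    by_cases hi : i < m + 1
    · simp [hi]
    · have : ¬ i ≤ m := by omega
      simp [hi, hc, this]
  refine ⟨∑ i ∈ Finset.range (m + 1), Polynomial.monomial i (c i), ?_, ?_, ?_⟩
  · rw [Polynomial.natDegree_le_iff_coeff_eq_zero]
    intro N hN
    rw [hcoeff]
    simp [hc, not_le.2 hN]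
  · rw [hcoeff]; simp [hc]
  · ext i
    rw [coeff_jacobiOp, Polynomial.coeff_smul, hcoeff, hcoeff, smul_eq_mul]
    rcases lt_trichotomy i m with hi | hi | hi
    · have hne : jacobiEig k μ m - jacobiEig k μ i ≠ 0 :=
        (sub_pos.2 (jacobiEig_lt hk hμ hi)).ne'
      have e1 : c i = (-(2 * (i + 1) * (2 * i + k + 1))
          / (jacobiEig k μ m - jacobiEig k μ i)) * c (i + 1) := by
        simp only [hc, if_pos hi.le, if_pos (Nat.succ_le_of_lt hi)]
        rw [Finset.prod_eq_prod_Ico_succ_bot hi]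
      rw [e1]
      field_simp
      ring
    · subst hi
      simp [hc]
    · simp [hc, not_le.2 hi, not_le.2 (show m < i + 1 by omega)]

/-! ### The one-dimensional inequalities -/

/-- The operator represents the Dirichlet form with weight `r^k (1 - r²)^(μ+1)`. -/
lemma radial_form_eq {k : ℕ} (hk : 1 ≤ k) {μ : ℝ} (hμ : -1 < μ) (a b : Polynomial ℝ) :
    radialJ μ hμ (Polynomial.X ^ k * (1 - Polynomial.X ^ 2) *
        ((Polynomial.expand ℝ 2 a).derivative * (Polynomial.expand ℝ 2 b).derivative))
      = radialJ μ hμ (Polynomial.X ^ k *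
        (Polynomial.expand ℝ 2 (jacobiOp k μ a) * Polynomial.expand ℝ 2 b)) := by
  have h := radialJ_ibp μ hμ (Polynomial.X ^ k *
    ((Polynomial.expand ℝ 2 a).derivative * Polynomial.expand ℝ 2 b)) (by
      simp [show k ≠ 0 by omega])
  rw [← sub_eq_zero, ← map_sub, ← h]
  congr 1
  obtain ⟨k, rfl⟩ : ∃ l, k = l + 1 := ⟨k - 1, by omega⟩
  simp only [jacobiOp, Polynomial.derivative_expand, map_mul, map_sub, map_add,
    Polynomial.expand_X, map_one, Polynomial.derivative_mul, Polynomial.derivative_X_pow,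
    Polynomial.smul_eq_C_mul, map_ofNat, map_natCast, Nat.add_sub_cancel, Polynomial.expand_C,
    Polynomial.derivative_natCast]
  push_cast
  simp
  ring

/-- The sharp inequality for even polynomials. The leading term is split off along the
eigenpolynomial, on which both sides agree, so no orthogonality is used. -/
lemma even_ineq {k : ℕ} (hk : 1 ≤ k) {μ : ℝ} (hμ : -1 < μ) (m : ℕ) :
    ∀ h : Polynomial ℝ, h.natDegree ≤ m →
    radialJ μ hμ (Polynomial.X ^ k * (1 - Polynomial.X ^ 2) *
        (Polynomial.expand ℝ 2 h).derivative ^ 2)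
      ≤ jacobiEig k μ m * radialJ μ hμ (Polynomial.X ^ k * Polynomial.expand ℝ 2 h ^ 2) := by
  induction m with
  | zero =>
    intro h hh
    rw [Polynomial.eq_C_of_natDegree_le_zero hh]
    simp [jacobiEig]
  | succ m ih =>
    intro h hh
    obtain ⟨p, hp1, hp2, hp3⟩ := exists_jacobi_eigen hk hμ (m + 1)
    set c := h.coeff (m + 1)
    obtain ⟨q, hq⟩ : ∃ q, q = h - c • p := ⟨_, rfl⟩
    have hqd : q.natDegree ≤ m := by
      rw [Polynomial.natDegree_le_iff_coeff_eq_zero]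
      intro N hN
      rcases Nat.lt_or_ge (m + 1) N with h1 | h1
      · rw [hq, Polynomial.coeff_sub, Polynomial.coeff_smul,
          Polynomial.coeff_eq_zero_of_natDegree_lt (by omega),
          Polynomial.coeff_eq_zero_of_natDegree_lt (by omega)]
        simp
      · obtain rfl : N = m + 1 := by omega
        simp [hq, hp2, c]
    have hh' : h = q + c • p := by rw [hq]; simp
    have h1 := ih q hqd
    have hpp := radial_form_eq hk hμ p p
    have hpq := radial_form_eq hk hμ p q
    rw [hp3, map_smul] at hpp hpq
    simp only [smul_mul_assoc, mul_smul_comm, map_smul, smul_eq_mul] at hpp hpq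
    have hN : 0 ≤ radialJ μ hμ (Polynomial.X ^ k * Polynomial.expand ℝ 2 q ^ 2) :=
      radialJ_nonneg _ _ _ fun r h0 _ => by
        simp only [Polynomial.eval_mul, Polynomial.eval_pow, Polynomial.eval_X]
        positivity
    have hlt := jacobiEig_lt hk hμ (Nat.lt_succ_self m)
    have e1 : Polynomial.X ^ k * (1 - Polynomial.X ^ 2) *
        (Polynomial.expand ℝ 2 h).derivative ^ 2
        = Polynomial.X ^ k * (1 - Polynomial.X ^ 2) *
          (Polynomial.expand ℝ 2 q).derivative ^ 2
        + (2 * c) • (Polynomial.X ^ k * (1 - Polynomial.X ^ 2) *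
          ((Polynomial.expand ℝ 2 p).derivative * (Polynomial.expand ℝ 2 q).derivative))
        + c ^ 2 • (Polynomial.X ^ k * (1 - Polynomial.X ^ 2) *
          ((Polynomial.expand ℝ 2 p).derivative * (Polynomial.expand ℝ 2 p).derivative)) := by
      rw [hh']
      simp only [map_add, Polynomial.smul_eq_C_mul, map_mul, map_pow, map_ofNat,
        Polynomial.expand_C, Polynomial.derivative_C_mul]
      ring
    have e2 : Polynomial.X ^ k * Polynomial.expand ℝ 2 h ^ 2
        = Polynomial.X ^ k * Polynomial.expand ℝ 2 q ^ 2
        + (2 * c) • (Polynomial.X ^ k *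
          (Polynomial.expand ℝ 2 p * Polynomial.expand ℝ 2 q))
        + c ^ 2 • (Polynomial.X ^ k *
          (Polynomial.expand ℝ 2 p * Polynomial.expand ℝ 2 p)) := by
      rw [hh']
      simp only [map_add, Polynomial.smul_eq_C_mul, map_mul, map_pow, map_ofNat,
        Polynomial.expand_C]
      ring
    rw [e1, e2]
    simp only [map_add, map_smul, smul_eq_mul]
    rw [hpp, hpq]
    nlinarith [mul_nonneg (sub_nonneg.2 hlt.le) hN]

/-- The inequality for odd polynomials `r b(r)`, `b` even: expanding `(r b)'` and integrating
the cross term by parts reduces it to `even_ineq` for `b` with `k + 2` in place of `k`. -/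
lemma odd_ineq {k : ℕ} (hk : 1 ≤ k) {μ : ℝ} (hμ : -1 < μ) (m : ℕ)
    (h : Polynomial ℝ) (hh : h.natDegree ≤ m) :
    radialJ μ hμ (Polynomial.X ^ k * (1 - Polynomial.X ^ 2) *
        (Polynomial.X * Polynomial.expand ℝ 2 h).derivative ^ 2)
      ≤ jacobiEig k μ (m + 1) *
        radialJ μ hμ (Polynomial.X ^ k * (Polynomial.X * Polynomial.expand ℝ 2 h) ^ 2) := by
  have h1 := even_ineq (k := k + 2) (by omega) hμ m h hh
  generalize Polynomial.expand ℝ 2 h = b at *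
  have hN : 0 ≤ radialJ μ hμ (Polynomial.X ^ (k + 2) * b ^ 2) :=
    radialJ_nonneg _ _ _ fun r h0 _ => by
      simp only [Polynomial.eval_mul, Polynomial.eval_pow, Polynomial.eval_X]
      positivity
  have hD : 0 ≤ radialJ μ hμ (Polynomial.X ^ k * (1 - Polynomial.X ^ 2) * b ^ 2) :=
    radialJ_nonneg _ _ _ fun r h0 h1 => by
      simp only [Polynomial.eval_mul, Polynomial.eval_pow, Polynomial.eval_X,
        Polynomial.eval_sub, Polynomial.eval_one]
      have : 0 ≤ 1 - r ^ 2 := by nlinarith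
      positivity
  have hI := radialJ_ibp μ hμ (Polynomial.X ^ (k + 1) * b ^ 2) (by simp)
  have e1 : Polynomial.X ^ k * (1 - Polynomial.X ^ 2) * (Polynomial.X * b).derivative ^ 2
      = ((1 - Polynomial.X ^ 2) * (Polynomial.X ^ (k + 1) * b ^ 2).derivative
        - (2 * (μ + 1)) • (Polynomial.X * (Polynomial.X ^ (k + 1) * b ^ 2)))
      + Polynomial.X ^ (k + 2) * (1 - Polynomial.X ^ 2) * b.derivative ^ 2
      - (k : ℝ) • (Polynomial.X ^ k * (1 - Polynomial.X ^ 2) * b ^ 2)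
      + (2 * (μ + 1)) • (Polynomial.X ^ (k + 2) * b ^ 2) := by
    simp only [Polynomial.derivative_mul, Polynomial.derivative_X,
      Polynomial.smul_eq_C_mul, Polynomial.derivative_pow, Nat.add_sub_cancel, map_natCast]
    push_cast
    simp
    ring
  have e2 : Polynomial.X ^ k * (Polynomial.X * b) ^ 2 = Polynomial.X ^ (k + 2) * b ^ 2 := by ring
  rw [e1, e2, map_add, map_sub, map_add, hI, map_smul, map_smul, smul_eq_mul, smul_eq_mul]
  have hk' : (1 : ℝ) ≤ k := by exact_mod_cast hk
  have hm : (0 : ℝ) ≤ m := by positivity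
  have hle : jacobiEig (k + 2) μ m + 2 * (μ + 1) ≤ jacobiEig k μ (m + 1) := by
    unfold jacobiEig
    push_cast
    nlinarith
  nlinarith [mul_le_mul_of_nonneg_right hle hN, mul_nonneg (by linarith : (0 : ℝ) ≤ k) hD]

/-- Splitting a polynomial into its even and odd parts. -/
lemma exists_even_odd (g : Polynomial ℝ) (m : ℕ) (hg : g.natDegree ≤ 2 * m) :
    ∃ a b : Polynomial ℝ, g = Polynomial.expand ℝ 2 a + Polynomial.X * Polynomial.expand ℝ 2 b ∧
      a.natDegree ≤ m ∧ (b = 0 ∨ ∃ l, m = l + 1 ∧ b.natDegree ≤ l) := by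
  have hb : ∀ i, m ≤ i → (Polynomial.contract 2 g.divX).coeff i = 0 := by
    intro i hi
    rw [Polynomial.coeff_contract two_ne_zero, Polynomial.coeff_divX]
    exact Polynomial.coeff_eq_zero_of_natDegree_lt (by omega)
  refine ⟨Polynomial.contract 2 g, Polynomial.contract 2 g.divX, ?_, ?_, ?_⟩
  · ext i
    rcases i with _ | i
    · simp [Polynomial.coeff_expand, Polynomial.coeff_contract]
    · rw [Polynomial.coeff_add, Polynomial.coeff_X_mul, Polynomial.coeff_expand two_pos,
        Polynomial.coeff_expand two_pos, Polynomial.coeff_contract two_ne_zero,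
        Polynomial.coeff_contract two_ne_zero, Polynomial.coeff_divX]
      rcases Nat.even_or_odd' i with ⟨j, rfl | rfl⟩
      · rw [if_neg (by omega), if_pos (by omega)]
        simp [mul_comm]
      · rw [if_pos (by omega), if_neg (by omega), add_zero]
        congr 1
        omega
  · rw [Polynomial.natDegree_le_iff_coeff_eq_zero]
    intro N hN
    rw [Polynomial.coeff_contract two_ne_zero]
    exact Polynomial.coeff_eq_zero_of_natDegree_lt (by omega)
  · rcases m with _ | l
    · left
      ext i
      simpa using hb i (Nat.zero_le i)
    · right
      refine ⟨l, rfl, ?_⟩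
      rw [Polynomial.natDegree_le_iff_coeff_eq_zero]
      exact fun N hN => hb N hN

/-- The inequality on a full diameter: `g(r)` and `g(-r)` are taken together, so that the even
and odd parts of `g` decouple. -/
lemma diameter_ineq {k : ℕ} (hk : 1 ≤ k) {μ : ℝ} (hμ : -1 < μ) (m : ℕ)
    (g : Polynomial ℝ) (hg : g.natDegree ≤ 2 * m) :
    radialJ μ hμ (Polynomial.X ^ k * (1 - Polynomial.X ^ 2) *
        (g.derivative ^ 2 + g.derivative.comp (-Polynomial.X) ^ 2))
      ≤ jacobiEig k μ m *
        radialJ μ hμ (Polynomial.X ^ k * (g ^ 2 + g.comp (-Polynomial.X) ^ 2)) := by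
  obtain ⟨a, b, hgab, ha, hb⟩ := exists_even_odd g m hg
  have hexp : ∀ p : Polynomial ℝ,
      (Polynomial.expand ℝ 2 p).comp (-Polynomial.X) = Polynomial.expand ℝ 2 p := by
    intro p
    simp [Polynomial.expand_eq_comp_X_pow, Polynomial.comp_assoc]
  have e1 : Polynomial.X ^ k * (1 - Polynomial.X ^ 2) *
        (g.derivative ^ 2 + g.derivative.comp (-Polynomial.X) ^ 2)
      = (2 : ℝ) • (Polynomial.X ^ k * (1 - Polynomial.X ^ 2) *
          (Polynomial.expand ℝ 2 a).derivative ^ 2)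
      + (2 : ℝ) • (Polynomial.X ^ k * (1 - Polynomial.X ^ 2) *
        (Polynomial.X * Polynomial.expand ℝ 2 b).derivative ^ 2) := by
    rw [hgab]
    simp only [map_add, Polynomial.derivative_mul, Polynomial.derivative_expand,
      Polynomial.derivative_X, Polynomial.add_comp, Polynomial.mul_comp, hexp,
      Polynomial.X_comp, Polynomial.smul_eq_C_mul, map_ofNat, Polynomial.one_comp,
      Polynomial.pow_comp, Polynomial.natCast_comp]
    ring
  have e2 : Polynomial.X ^ k * (g ^ 2 + g.comp (-Polynomial.X) ^ 2)
      = (2 : ℝ) • (Polynomial.X ^ k * Polynomial.expand ℝ 2 a ^ 2)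
      + (2 : ℝ) • (Polynomial.X ^ k * (Polynomial.X * Polynomial.expand ℝ 2 b) ^ 2) := by
    rw [hgab]
    simp only [Polynomial.add_comp, Polynomial.mul_comp, hexp,
      Polynomial.X_comp, Polynomial.smul_eq_C_mul, map_ofNat]
    ring
  rw [e1, e2, map_add, map_add, map_smul, map_smul, map_smul, map_smul]
  simp only [smul_eq_mul]
  have hA := even_ineq hk hμ m a ha
  have hB : radialJ μ hμ (Polynomial.X ^ k * (1 - Polynomial.X ^ 2) *
        (Polynomial.X * Polynomial.expand ℝ 2 b).derivative ^ 2)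
      ≤ jacobiEig k μ m *
        radialJ μ hμ (Polynomial.X ^ k * (Polynomial.X * Polynomial.expand ℝ 2 b) ^ 2) := by
    rcases hb with rfl | ⟨l, rfl, hl⟩
    · simp
    · exact odd_ineq hk hμ l b hl
  linarith

/-- Equality on a diameter for `g(r) = p(r²)` with `p` an eigenpolynomial. -/
lemma diameter_eq {k : ℕ} (hk : 1 ≤ k) {μ : ℝ} (hμ : -1 < μ) (m : ℕ)
    (p : Polynomial ℝ) (hp : jacobiOp k μ p = jacobiEig k μ m • p) :
    radialJ μ hμ (Polynomial.X ^ k * (1 - Polynomial.X ^ 2) *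
        ((Polynomial.expand ℝ 2 p).derivative ^ 2
          + (Polynomial.expand ℝ 2 p).derivative.comp (-Polynomial.X) ^ 2))
      = jacobiEig k μ m * radialJ μ hμ (Polynomial.X ^ k *
        (Polynomial.expand ℝ 2 p ^ 2 + (Polynomial.expand ℝ 2 p).comp (-Polynomial.X) ^ 2)) := by
  have hexp : ∀ p : Polynomial ℝ,
      (Polynomial.expand ℝ 2 p).comp (-Polynomial.X) = Polynomial.expand ℝ 2 p := by
    intro p
    simp [Polynomial.expand_eq_comp_X_pow, Polynomial.comp_assoc]
  have h := radial_form_eq hk hμ p p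
  rw [hp, map_smul, smul_mul_assoc, mul_smul_comm, map_smul, smul_eq_mul] at h
  have e1 : Polynomial.X ^ k * (1 - Polynomial.X ^ 2) *
        ((Polynomial.expand ℝ 2 p).derivative ^ 2
          + (Polynomial.expand ℝ 2 p).derivative.comp (-Polynomial.X) ^ 2)
      = (2 : ℝ) • (Polynomial.X ^ k * (1 - Polynomial.X ^ 2) *
          ((Polynomial.expand ℝ 2 p).derivative * (Polynomial.expand ℝ 2 p).derivative)) := by
    simp only [Polynomial.derivative_expand, Polynomial.mul_comp, hexp, Polynomial.X_comp,
      Polynomial.smul_eq_C_mul, map_ofNat, Polynomial.pow_comp, Polynomial.natCast_comp]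
    ring
  have e2 : Polynomial.X ^ k *
        (Polynomial.expand ℝ 2 p ^ 2 + (Polynomial.expand ℝ 2 p).comp (-Polynomial.X) ^ 2)
      = (2 : ℝ) • (Polynomial.X ^ k * (Polynomial.expand ℝ 2 p * Polynomial.expand ℝ 2 p)) := by
    rw [hexp]
    simp only [Polynomial.smul_eq_C_mul, map_ofNat]
    ring
  rw [e1, e2, map_smul, map_smul, smul_eq_mul, smul_eq_mul, h]
  ring

/-! ### Polar coordinates on the ball -/

lemma lintegral_polar {d : ℕ} (hd : 2 ≤ d) (F : (Fin d → ℝ) → ℝ≥0∞) (hF : Measurable F) :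
    ∫⁻ x, F x = ∫⁻ ω : Metric.sphere (0 : EuclideanSpace ℝ (Fin d)) 1,
      (∫⁻ r in Set.Ioi (0 : ℝ), ENNReal.ofReal (r ^ (d - 1)) * F (fun i => r * ω.1 i))
        ∂(volume : Measure (EuclideanSpace ℝ (Fin d))).toSphere := by
  have : Nonempty (Fin d) := ⟨⟨0, by omega⟩⟩
  have h0 : ∫⁻ x, F x = ∫⁻ a : ({0}ᶜ : Set (EuclideanSpace ℝ (Fin d))), F (WithLp.ofLp a.1)
      ∂(volume.comap Subtype.val) := by
    rw [← (PiLp.volume_preserving_ofLp (Fin d)).lintegral_comp hF,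
      lintegral_subtype_comap (measurableSet_singleton _).compl
        (fun a : EuclideanSpace ℝ (Fin d) => F (WithLp.ofLp a)),
      MeasureTheory.restrict_compl_singleton]
  rw [h0]
  have hmp :=
    (volume : Measure (EuclideanSpace ℝ (Fin d))).measurePreserving_homeomorphUnitSphereProd
  have hG : Measurable fun z : Metric.sphere (0 : EuclideanSpace ℝ (Fin d)) 1 × Set.Ioi (0 : ℝ) =>
      F (fun i => z.2.1 * z.1.1 i) := by
    refine hF.comp (measurable_pi_lambda _ fun i => ?_)
    have : Continuous fun z : Metric.sphere (0 : EuclideanSpace ℝ (Fin d)) 1 × Set.Ioi (0 : ℝ) =>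
      z.2.1 * z.1.1 i := by fun_prop
    exact this.measurable
  have e := hmp.lintegral_comp hG
  rw [lintegral_prod _ hG.aemeasurable] at e
  trans ∫⁻ a : ({0}ᶜ : Set (EuclideanSpace ℝ (Fin d))),
      F (fun i => ((homeomorphUnitSphereProd (EuclideanSpace ℝ (Fin d))) a).2.1 *
        ((homeomorphUnitSphereProd (EuclideanSpace ℝ (Fin d))) a).1.1 i)
      ∂(volume.comap Subtype.val)
  · refine lintegral_congr fun a => ?_
    congr 1
    ext i
    have ha : ‖a.1‖ ≠ 0 := norm_ne_zero_iff.2 a.2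
    simp [homeomorphUnitSphereProd, ha]
  · rw [e]
    refine lintegral_congr fun ω => ?_
    rw [Measure.volumeIoiPow, lintegral_withDensity_eq_lintegral_mul₀]
    · rw [← lintegral_subtype_comap measurableSet_Ioi]
      simp
    · exact (by fun_prop : Measurable _).aemeasurable
    · exact (hG.comp (by fun_prop : Measurable (fun r => (ω, r)))).aemeasurable

lemma continuous_eunorm {d : ℕ} : Continuous (eunorm : (Fin d → ℝ) → ℝ) := by
  unfold eunorm
  fun_prop

lemma measurableSet_Bd (d : ℕ) : MeasurableSet (Bd d) :=
  (isClosed_le continuous_eunorm continuous_const).measurableSet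

lemma sphere_sum_sq {d : ℕ} (ω : Metric.sphere (0 : EuclideanSpace ℝ (Fin d)) 1) :
    ∑ i, ω.1 i ^ 2 = 1 := by
  have h : ‖ω.1‖ = 1 := by simp
  have h2 := EuclideanSpace.norm_sq_eq ω.1
  rw [h] at h2
  simpa using h2.symm

lemma eunorm_ray {d : ℕ} (ω : Metric.sphere (0 : EuclideanSpace ℝ (Fin d)) 1) (r : ℝ) :
    eunorm (fun i => r * ω.1 i) = |r| := by
  unfold eunorm
  simp only [mul_pow]
  rw [← Finset.mul_sum, sphere_sum_sq, mul_one, Real.sqrt_sq_eq_abs]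

lemma Wmu_nonneg {d : ℕ} (μ : ℝ) {x : Fin d → ℝ} (hx : x ∈ Bd d) : 0 ≤ Wmu d μ x := by
  have h1 : eunorm x ≤ 1 := hx
  have h0 : 0 ≤ eunorm x := Real.sqrt_nonneg _
  exact Real.rpow_nonneg (by nlinarith) _

/-- Polar coordinates, with antipodal directions added, for an integrand whose restriction to
each diameter is a polynomial times the weight. -/
lemma ball_lintegral {d : ℕ} (hd : 2 ≤ d) {μ : ℝ} (hμ : -1 < μ) (G : (Fin d → ℝ) → ℝ)
    (hG : Measurable G) (hpos : ∀ x ∈ Bd d, 0 ≤ G x)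
    (q : Metric.sphere (0 : EuclideanSpace ℝ (Fin d)) 1 → Polynomial ℝ)
    (hq : ∀ ω, ∀ r : ℝ, 0 < r → r < 1 →
      r ^ (d - 1) * (G (fun i => r * ω.1 i) + G (fun i => -r * ω.1 i))
        = (q ω).eval r * (1 - r ^ 2) ^ μ) :
    2 * ∫⁻ x in Bd d, ENNReal.ofReal (G x)
      = ∫⁻ ω, ENNReal.ofReal (radialJ μ hμ (q ω))
        ∂(volume : Measure (EuclideanSpace ℝ (Fin d))).toSphere := by
  set F : (Fin d → ℝ) → ℝ≥0∞ := (Bd d).indicator fun x => ENNReal.ofReal (G x) with hFdef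
  have hF : Measurable F := hG.ennreal_ofReal.indicator (measurableSet_Bd d)
  have hneg : ∫⁻ x, F (-x) = ∫⁻ x, F x :=
    (Measure.measurePreserving_neg (volume : Measure (Fin d → ℝ))).lintegral_comp hF
  rw [← lintegral_indicator (measurableSet_Bd d), ← hFdef, two_mul]
  nth_rewrite 2 [← hneg]
  rw [← lintegral_add_left hF, lintegral_polar hd (fun x => F x + F (-x))
    (hF.add (hF.comp measurable_neg))]
  refine lintegral_congr fun ω => ?_
  have hmem : ∀ r : ℝ, (fun i => r * ω.1 i) ∈ Bd d ↔ |r| ≤ 1 := fun r => by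
    simp [Bd, eunorm_ray]
  have hnegray : ∀ r : ℝ, -(fun i => r * ω.1 i) = fun i => -r * ω.1 i := fun r => by
    ext i; simp
  have hin : ∀ r ∈ Set.Ioo (0 : ℝ) 1,
      ENNReal.ofReal (r ^ (d - 1)) * (F (fun i => r * ω.1 i) + F (-fun i => r * ω.1 i))
        = ENNReal.ofReal ((q ω).eval r * (1 - r ^ 2) ^ μ) := by
    intro r hr
    have h1 : (fun i => r * ω.1 i) ∈ Bd d := (hmem r).2 (by rw [abs_of_pos hr.1]; exact hr.2.le)
    have h2 : (fun i => -r * ω.1 i) ∈ Bd d :=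
      (hmem (-r)).2 (by rw [abs_neg, abs_of_pos hr.1]; exact hr.2.le)
    rw [hnegray, hFdef, Set.indicator_of_mem h1, Set.indicator_of_mem h2,
      ← ENNReal.ofReal_add (hpos _ h1) (hpos _ h2),
      ← ENNReal.ofReal_mul (pow_nonneg hr.1.le _), hq ω r hr.1 hr.2]
  have hout : ∀ r ∈ Set.Ioi (0 : ℝ) \ Set.Ioc (0 : ℝ) 1,
      ENNReal.ofReal (r ^ (d - 1)) * (F (fun i => r * ω.1 i) + F (-fun i => r * ω.1 i)) = 0 := by
    intro r hr
    have hr0 : 0 < r := hr.1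
    have hr1 : ¬ r ≤ 1 := fun h => hr.2 ⟨hr0, h⟩
    rw [hnegray, hFdef, Set.indicator_of_notMem, Set.indicator_of_notMem]
    · simp
    · rw [hmem, abs_neg, abs_of_pos hr0]; exact hr1
    · rw [hmem, abs_of_pos hr0]; exact hr1
  rw [← lintegral_inter_add_sdiff _ (Set.Ioi (0 : ℝ)) (measurableSet_Ioc (a := 0) (b := 1)),
    setLIntegral_congr_fun (measurableSet_Ioi.diff measurableSet_Ioc) hout, lintegral_zero,
    add_zero, Set.inter_eq_self_of_subset_right Set.Ioc_subset_Ioi_self,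
    setLIntegral_congr Ioo_ae_eq_Ioc.symm,
    setLIntegral_congr_fun measurableSet_Ioo hin, radialJ_apply,
    intervalIntegral.integral_of_le zero_le_one, integral_Ioc_eq_integral_Ioo,
    ofReal_integral_eq_lintegral_ofReal]
  · exact ((intervalIntegrable_iff_integrableOn_Ioo_of_le zero_le_one).1
      (poly_mul_weight_intervalIntegrable hμ (q ω)))
  · filter_upwards [ae_restrict_mem measurableSet_Ioo] with r hr
    rw [Pi.zero_apply, ← hq ω r hr.1 hr.2]
    refine mul_nonneg (pow_nonneg hr.1.le _) (add_nonneg (hpos _ ?_) (hpos _ ?_))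
    · rw [hmem, abs_of_pos hr.1]; exact hr.2.le
    · rw [hmem, abs_neg, abs_of_pos hr.1]; exact hr.2.le

/-! ### Restriction of a polynomial to a line through the origin -/

/-- The univariate polynomial `r ↦ f(r v)`. -/
def rayPoly {d : ℕ} (v : Fin d → ℝ) (f : MvPolynomial (Fin d) ℝ) : Polynomial ℝ :=
  MvPolynomial.aeval (fun i => Polynomial.C (v i) * Polynomial.X) f

lemma eval_rayPoly {d : ℕ} (v : Fin d → ℝ) (f : MvPolynomial (Fin d) ℝ) (r : ℝ) :
    (rayPoly v f).eval r = evalP f (fun i => r * v i) := by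
  unfold rayPoly evalP
  induction f using MvPolynomial.induction_on with
  | C a => simp
  | add p q hp hq => simp [hp, hq]
  | mul_X p i hp =>
    simp only [map_mul, MvPolynomial.aeval_X, Polynomial.eval_mul, hp, Polynomial.eval_C,
      Polynomial.eval_X, MvPolynomial.eval_X, mul_comm (v i) r]

lemma natDegree_rayPoly {d : ℕ} (v : Fin d → ℝ) (f : MvPolynomial (Fin d) ℝ) :
    (rayPoly v f).natDegree ≤ f.totalDegree := by
  have := MvPolynomial.aeval_natDegree_le (m := f.totalDegree) (n := 1) f le_rfl
    (fun i => Polynomial.C (v i) * Polynomial.X)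
    (fun i => (Polynomial.natDegree_C_mul_le _ _).trans Polynomial.natDegree_X_le)
  simpa [rayPoly] using this

lemma derivative_rayPoly {d : ℕ} (v : Fin d → ℝ) (f : MvPolynomial (Fin d) ℝ) :
    (rayPoly v f).derivative = ∑ i, Polynomial.C (v i) * rayPoly v (pderiv i f) := by
  unfold rayPoly
  set φ : MvPolynomial (Fin d) ℝ →ₐ[ℝ] Polynomial ℝ :=
    MvPolynomial.aeval fun i => Polynomial.C (v i) * Polynomial.X with hφ
  have hX : ∀ i, φ (X i) = Polynomial.C (v i) * Polynomial.X := fun i =>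
    MvPolynomial.aeval_X _ i
  clear_value φ
  induction f using MvPolynomial.induction_on with
  | C a =>
    rw [← MvPolynomial.algebraMap_eq]
    simp
  | add p q hp hq => simp [hp, hq, mul_add, Finset.sum_add_distrib]
  | mul_X p i hp =>
    have h : ∀ j, Polynomial.C (v j) * φ (pderiv j (p * X i))
        = Polynomial.C (v j) * φ (pderiv j p) * φ (X i)
          + if j = i then Polynomial.C (v i) * φ p else 0 := by
      intro j
      rw [pderiv_mul, MvPolynomial.pderiv_X, map_add, map_mul, map_mul]
      by_cases hj : j = i
      · subst hj
        simp
        ring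
      · simp [hj]
        ring
    rw [Finset.sum_congr rfl fun j _ => h j, Finset.sum_add_distrib, ← Finset.sum_mul, ← hp,
      map_mul, Polynomial.derivative_mul, hX]
    simp
    ring

lemma euler_ray {d : ℕ} (v : Fin d → ℝ) (f : MvPolynomial (Fin d) ℝ) (r : ℝ) :
    ∑ i, (r * v i) * evalP (pderiv i f) (fun i => r * v i)
      = r * (rayPoly v f).derivative.eval r := by
  rw [derivative_rayPoly, Polynomial.eval_finsetSum, Finset.mul_sum]
  refine Finset.sum_congr rfl fun i _ => ?_
  rw [Polynomial.eval_mul, Polynomial.eval_C, eval_rayPoly]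
  ring

/-! ### The two weighted norms in polar coordinates -/

lemma measurable_evalP {d : ℕ} (f : MvPolynomial (Fin d) ℝ) : Measurable (evalP f) :=
  (MvPolynomial.continuous_eval f).measurable

lemma measurable_Wmu (d : ℕ) (μ : ℝ) : Measurable (Wmu d μ) := by
  unfold Wmu
  have := (continuous_eunorm (d := d)).measurable
  fun_prop

lemma sqNormMu_eq_toReal {d : ℕ} (μ : ℝ) (u : (Fin d → ℝ) → ℝ) (hu : Measurable u) :
    sqNormMu d μ u = (∫⁻ x in Bd d, ENNReal.ofReal (u x ^ 2 * Wmu d μ x)).toReal := by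
  unfold sqNormMu
  rw [integral_eq_lintegral_of_nonneg_ae]
  · filter_upwards [ae_restrict_mem (measurableSet_Bd d)] with x hx
    exact mul_nonneg (sq_nonneg _) (Wmu_nonneg μ hx)
  · exact ((hu.pow_const 2).mul (measurable_Wmu d μ)).aestronglyMeasurable

lemma lintegral_sq_evalP {d : ℕ} (hd : 2 ≤ d) {μ : ℝ} (hμ : -1 < μ)
    (f : MvPolynomial (Fin d) ℝ) :
    2 * ∫⁻ x in Bd d, ENNReal.ofReal (evalP f x ^ 2 * Wmu d μ x)
      = ∫⁻ ω, ENNReal.ofReal (radialJ μ hμ (Polynomial.X ^ (d - 1) *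
          (rayPoly ω.1 f ^ 2 + (rayPoly ω.1 f).comp (-Polynomial.X) ^ 2)))
        ∂(volume : Measure (EuclideanSpace ℝ (Fin d))).toSphere := by
  refine ball_lintegral hd hμ (fun x => evalP f x ^ 2 * Wmu d μ x)
    (((measurable_evalP f).pow_const 2).mul (measurable_Wmu d μ))
    (fun x hx => mul_nonneg (sq_nonneg _) (Wmu_nonneg μ hx)) _ ?_
  intro ω r hr0 hr1
  beta_reduce
  simp only [Wmu, eunorm_ray, sq_abs, neg_sq, ← eval_rayPoly, Polynomial.eval_mul,
    Polynomial.eval_pow, Polynomial.eval_X, Polynomial.eval_add, Polynomial.eval_comp,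
    Polynomial.eval_neg]
  ring

/-- The function `(√(1 - ‖x‖²) / ‖x‖) ⟨x, ∇⟩ f(x)`. -/
def radialGrad {d : ℕ} (f : MvPolynomial (Fin d) ℝ) (x : Fin d → ℝ) : ℝ :=
  Real.sqrt (1 - eunorm x ^ 2) / eunorm x * ∑ i, x i * evalP (pderiv i f) x

lemma measurable_radialGrad {d : ℕ} (f : MvPolynomial (Fin d) ℝ) : Measurable (radialGrad f) := by
  unfold radialGrad
  have h1 := (continuous_eunorm (d := d)).measurable
  have h2 : ∀ i, Measurable (evalP (pderiv i f)) := fun i => measurable_evalP _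
  fun_prop

lemma radialGrad_ray_sq {d : ℕ} (f : MvPolynomial (Fin d) ℝ)
    (ω : Metric.sphere (0 : EuclideanSpace ℝ (Fin d)) 1) (r : ℝ) (hr0 : r ≠ 0) (hr1 : r ^ 2 ≤ 1) :
    radialGrad f (fun i => r * ω.1 i) ^ 2
      = (1 - r ^ 2) * (rayPoly ω.1 f).derivative.eval r ^ 2 := by
  unfold radialGrad
  rw [euler_ray, eunorm_ray, mul_pow, div_pow, sq_abs, Real.sq_sqrt (by linarith)]
  field_simp

lemma lintegral_sq_radialGrad {d : ℕ} (hd : 2 ≤ d) {μ : ℝ} (hμ : -1 < μ)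
    (f : MvPolynomial (Fin d) ℝ) :
    2 * ∫⁻ x in Bd d, ENNReal.ofReal (radialGrad f x ^ 2 * Wmu d μ x)
      = ∫⁻ ω, ENNReal.ofReal (radialJ μ hμ (Polynomial.X ^ (d - 1) * (1 - Polynomial.X ^ 2) *
          ((rayPoly ω.1 f).derivative ^ 2
            + (rayPoly ω.1 f).derivative.comp (-Polynomial.X) ^ 2)))
        ∂(volume : Measure (EuclideanSpace ℝ (Fin d))).toSphere := by
  refine ball_lintegral hd hμ (fun x => radialGrad f x ^ 2 * Wmu d μ x)
    (((measurable_radialGrad f).pow_const 2).mul (measurable_Wmu d μ))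
    (fun x hx => mul_nonneg (sq_nonneg _) (Wmu_nonneg μ hx)) _ ?_
  intro ω r hr0 hr1
  beta_reduce
  rw [radialGrad_ray_sq f ω r hr0.ne' (by nlinarith),
    radialGrad_ray_sq f ω (-r) (neg_ne_zero.2 hr0.ne') (by nlinarith)]
  simp only [Wmu, eunorm_ray, sq_abs, neg_sq, Polynomial.eval_mul, Polynomial.eval_sub,
    Polynomial.eval_pow, Polynomial.eval_X, Polynomial.eval_add, Polynomial.eval_comp,
    Polynomial.eval_neg, Polynomial.eval_one]
  ring

/-- Finiteness of the right-hand side: `f²` is bounded on the ball, and the weight is integrable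
because `μ > -1`. -/
lemma lintegral_sq_evalP_ne_top {d : ℕ} (hd : 2 ≤ d) {μ : ℝ} (hμ : -1 < μ)
    (f : MvPolynomial (Fin d) ℝ) :
    ∫⁻ x in Bd d, ENNReal.ofReal (evalP f x ^ 2 * Wmu d μ x) ≠ ⊤ := by
  have hW : ∫⁻ x in Bd d, ENNReal.ofReal (Wmu d μ x) ≠ ⊤ := by
    have h := lintegral_sq_evalP hd hμ (1 : MvPolynomial (Fin d) ℝ)
    simp only [evalP, rayPoly, map_one, one_pow, one_mul, Polynomial.one_comp,
      lintegral_const] at h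
    intro htop
    rw [htop] at h
    refine absurd h.symm (ne_of_lt ?_)
    rw [ENNReal.mul_top two_ne_zero]
    exact ENNReal.mul_lt_top ENNReal.ofReal_lt_top (measure_lt_top _ _)
  obtain ⟨M, hM⟩ : ∃ M, ∀ x ∈ Set.Icc (-1 : Fin d → ℝ) 1, evalP f x ^ 2 ≤ M := by
    have := (isCompact_Icc (a := (-1 : Fin d → ℝ)) (b := 1)).exists_bound_of_continuousOn
      (f := fun x => evalP f x ^ 2) (((MvPolynomial.continuous_eval f).pow 2).continuousOn)
    obtain ⟨M, hM⟩ := this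
    exact ⟨M, fun x hx => (le_abs_self _).trans (hM x hx)⟩
  have hsub : Bd d ⊆ Set.Icc (-1 : Fin d → ℝ) 1 := by
    intro x hx
    have h1 : eunorm x ≤ 1 := hx
    have h0 : 0 ≤ eunorm x := Real.sqrt_nonneg _
    have h2 : ∀ i, |x i| ≤ 1 := fun i => by
      rw [← sq_le_one_iff_abs_le_one]
      have := Finset.single_le_sum (f := fun i => x i ^ 2) (fun j _ => sq_nonneg _)
        (Finset.mem_univ i)
      have h3 := eunorm_sq x
      nlinarith
    exact ⟨fun i => (abs_le.1 (h2 i)).1, fun i => (abs_le.1 (h2 i)).2⟩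
  refine ne_top_of_le_ne_top (ENNReal.mul_ne_top (ENNReal.ofReal_ne_top (r := M)) hW) ?_
  rw [← lintegral_const_mul' _ _ ENNReal.ofReal_ne_top]
  refine setLIntegral_mono' (measurableSet_Bd d) fun x hx => ?_
  have hMx := hM x (hsub hx)
  rw [← ENNReal.ofReal_mul ((sq_nonneg _).trans hMx)]
  exact ENNReal.ofReal_le_ofReal (mul_le_mul_of_nonneg_right hMx (Wmu_nonneg μ hx))

/-! ### The extremal polynomial -/

/-- The radial polynomial `p(‖x‖²)`. -/
def radialPoly (d : ℕ) (p : Polynomial ℝ) : MvPolynomial (Fin d) ℝ :=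
  Polynomial.aeval (∑ i, X i ^ 2 : MvPolynomial (Fin d) ℝ) p

lemma rayPoly_radialPoly {d : ℕ} (v : Fin d → ℝ) (hv : ∑ i, v i ^ 2 = 1) (p : Polynomial ℝ) :
    rayPoly v (radialPoly d p) = Polynomial.expand ℝ 2 p := by
  unfold rayPoly radialPoly
  rw [← Polynomial.aeval_algHom_apply, Polynomial.expand_eq_comp_X_pow, Polynomial.comp_eq_aeval]
  congr 2
  simp only [map_sum, map_pow, MvPolynomial.aeval_X, mul_pow]
  rw [← Finset.sum_mul]
  simp only [← Polynomial.C_pow]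
  rw [← map_sum, hv]
  simp

lemma totalDegree_radialPoly {d : ℕ} (hd : 2 ≤ d) {p : Polynomial ℝ} {m : ℕ}
    (hp : p.natDegree ≤ m) (hm : p.coeff m = 1) : (radialPoly d p).totalDegree = 2 * m := by
  apply le_antisymm
  · unfold radialPoly
    rw [Polynomial.aeval_eq_sum_range]
    refine MvPolynomial.totalDegree_finsetSum_le fun i hi => ?_
    refine (MvPolynomial.totalDegree_smul_le _ _).trans
      ((MvPolynomial.totalDegree_pow _ _).trans ?_)
    have h1 : (∑ i, X i ^ 2 : MvPolynomial (Fin d) ℝ).totalDegree ≤ 2 :=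
      MvPolynomial.totalDegree_finsetSum_le fun j _ => by simp
    have h2 : i ≤ m := by
      have := Finset.mem_range.1 hi
      omega
    nlinarith
  · have h1 := natDegree_rayPoly (Pi.single (⟨0, by omega⟩ : Fin d) (1 : ℝ)) (radialPoly d p)
    rw [rayPoly_radialPoly _ (by simp [Pi.single_apply]), Polynomial.natDegree_expand] at h1
    have h2 : m ≤ p.natDegree := Polynomial.le_natDegree_of_ne_zero (by simp [hm])
    omega

/-- for even `n`, the sharp Bernstein inequality
`‖(√(1−‖x‖²)/‖x‖)⟨x,∇⟩f‖_{μ,2} ≤ √(n(n+2μ+d)) ‖f‖_{μ,2}`, with equality attained by a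
nonzero polynomial of degree `n`. -/
theorem stmt8 (d : ℕ) (hd : 2 ≤ d) (μ : ℝ) (hμ : -1 < μ) (n : ℕ) (hn : Even n) :
    (∀ f : MvPolynomial (Fin d) ℝ, f.totalDegree ≤ n →
      normMu d μ (fun x => Real.sqrt (1 - eunorm x ^ 2) / eunorm x *
          ∑ i, x i * evalP (pderiv i f) x)
        ≤ Real.sqrt ((n : ℝ) * ((n : ℝ) + 2 * μ + d)) * normMu d μ (evalP f))
    ∧ (∃ f : MvPolynomial (Fin d) ℝ, f ≠ 0 ∧ f.totalDegree = n ∧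
      normMu d μ (fun x => Real.sqrt (1 - eunorm x ^ 2) / eunorm x *
          ∑ i, x i * evalP (pderiv i f) x)
        = Real.sqrt ((n : ℝ) * ((n : ℝ) + 2 * μ + d)) * normMu d μ (evalP f)) := by
  obtain ⟨m, hm⟩ := hn
  have hk : 1 ≤ d - 1 := by omega
  have hk' : ((d - 1 : ℕ) : ℝ) = d - 1 := by rw [Nat.cast_sub (by omega)]; simp
  have hlam : (n : ℝ) * ((n : ℝ) + 2 * μ + d) = jacobiEig (d - 1) μ m := by
    unfold jacobiEig
    rw [hk', hm]
    push_cast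
    ring
  have hlam0 : 0 ≤ jacobiEig (d - 1) μ m := by
    have h0 : jacobiEig (d - 1) μ 0 = 0 := by simp [jacobiEig]
    rcases Nat.eq_zero_or_pos m with rfl | h
    · exact h0.ge
    · exact h0.symm.trans_le (jacobiEig_lt hk hμ h).le
  rw [hlam]
  have hcancel : ∀ a b : ℝ≥0∞, 2 * a = 2 * b → a = b := fun a b h =>
    (ENNReal.mul_right_inj two_ne_zero ENNReal.ofNat_ne_top).1 h
  constructor
  · intro f hf
    change normMu d μ (radialGrad f) ≤ _
    unfold normMu
    rw [← Real.sqrt_mul hlam0]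
    refine Real.sqrt_le_sqrt ?_
    rw [sqNormMu_eq_toReal μ _ (measurable_radialGrad f),
      sqNormMu_eq_toReal μ _ (measurable_evalP f),
      ← ENNReal.toReal_ofReal hlam0, ← ENNReal.toReal_mul]
    refine ENNReal.toReal_mono (ENNReal.mul_ne_top ENNReal.ofReal_ne_top
      (lintegral_sq_evalP_ne_top hd hμ f)) ?_
    rw [← ENNReal.mul_le_mul_iff_right (a := 2) two_ne_zero ENNReal.ofNat_ne_top, mul_left_comm,
      lintegral_sq_radialGrad hd hμ, lintegral_sq_evalP hd hμ,
      ← lintegral_const_mul' _ _ ENNReal.ofReal_ne_top]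
    refine lintegral_mono fun ω => ?_
    rw [← ENNReal.ofReal_mul hlam0]
    refine ENNReal.ofReal_le_ofReal (diameter_ineq hk hμ m _ ?_)
    have := natDegree_rayPoly ω.1 f
    omega
  · obtain ⟨p, hp1, hp2, hp3⟩ := exists_jacobi_eigen hk hμ m
    refine ⟨radialPoly d p, ?_, ?_, ?_⟩
    · intro h0
      have h := rayPoly_radialPoly (Pi.single (⟨0, by omega⟩ : Fin d) (1 : ℝ))
        (by simp [Pi.single_apply]) p
      rw [h0, rayPoly, map_zero] at h
      have hp0 : p = 0 := (Polynomial.expand_eq_zero two_pos).1 h.symm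
      rw [hp0] at hp2
      simp at hp2
    · rw [totalDegree_radialPoly hd hp1 hp2]
      omega
    · change normMu d μ (radialGrad (radialPoly d p)) = _
      unfold normMu
      rw [← Real.sqrt_mul hlam0]
      congr 1
      rw [sqNormMu_eq_toReal μ _ (measurable_radialGrad _),
        sqNormMu_eq_toReal μ _ (measurable_evalP _),
        ← ENNReal.toReal_ofReal hlam0, ← ENNReal.toReal_mul]
      congr 1
      apply hcancel
      rw [mul_left_comm, lintegral_sq_radialGrad hd hμ, lintegral_sq_evalP hd hμ,
        ← lintegral_const_mul' _ _ ENNReal.ofReal_ne_top]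
      refine lintegral_congr fun ω => ?_
      rw [← ENNReal.ofReal_mul hlam0, rayPoly_radialPoly _ (sphere_sum_sq ω),
        diameter_eq hk hμ m p hp3]

end
end
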